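/- arXiv:2004.06553 — 2 statements merged into one kernel-verified Lean document; each statement's English description precedes it below -/
import Mathlib

section
/- Suppose d − m ≤ α < d. Then β(α, H_m^{d−1}) = α − 1 in the following sense: (i) for every β with 0 < β < α − 1 there exists a constant C_β such that for every μ ∈ M_d and every R > 1, ∫_{B^{d−1}(0,1)} |μ̂(R(ξ, ⟨Mξ,ξ⟩))|² √(1+4|ξ|²) dξ ≤ C_β R^{−β} I_α(μ); and (ii) for every β > α − 1 and every C > 0 there exist μ ∈ M_d with 0 < I_α(μ) < ∞ and R > 1 such that ∫_{B^{d−1}(0,1)} |μ̂(R(ξ, ⟨Mξ,ξ⟩))|² √(1+4|ξ|²) dξ > C R^{−β} I_α(μ). -/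
/-!
**Upper bound.** Since `μ` lives in the unit ball, `μ = e^{-|x|²/2} ν` with `ν` comparable to `μ`.
Hence `μ̂(Rp)` is an average of `ν̂` against a Gaussian at unit distance from `Rp`. The points `R p`
with `p ∈ H` lie on a graph, so the `(d-1)`-dimensional measure of those `ξ` whose point is within
`O(1)` of a given frequency is `O(R^{-(d-1)})`. The average over `H` is therefore at most
`R^{-(d-1)} ∫_{|η| ≲ R} |ν̂(η)|² dη ≲ R^{-(d-1)} R^{d-α} I_α(ν) = R^{1-α} I_α(ν)`. Only the graph
structure enters, not the curvature.

**Lower bound.** The vectors `eᵢ + e_{d-2-i}` with `i < m` span an `m`-dimensional subspace on which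
`⟨M ·, ·⟩` vanishes. Let `μ` be Lebesgue measure on a box of width `R⁻¹` in these directions and of
width `1` in the others, and let `ξ` range over the box with the two widths exchanged. There
`⟨Mξ, ξ⟩ = O(R⁻¹)`, so the phases `R x·(ξ, ⟨Mξ, ξ⟩)` stay bounded and the average is
`≳ R^{-2m} R^{-(d-1-m)}`. Bounding `|x - y|^{-α}` by a product of one-dimensional kernels
`|xₖ - yₖ|^{-aₖ}` with `aₖ < 1` and `∑ aₖ = α` gives an energy `≲ R^{s-2m}`, where `s` is the sum
of the `aₖ` over the `m` isotropic directions. The other `d-m` directions absorb any amount below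
`d-m`, so `s` can be taken just above `max 0 (α - (d-m))`, and the quotient `R^{-(d-1-m)-s}` has
exponent arbitrarily close to `max (α-1) (d-1-m)`.
-/

open MeasureTheory Metric
open scoped ENNReal NNReal

noncomputable section

/-- The quadratic form `⟨Mξ, ξ⟩` on `ℝ^{d-1}`, where the diagonal matrix `M` has its first
`d-1-m` diagonal entries equal to `+1` and its last `m` diagonal entries equal to `-1`. -/
def hypQ (d m : ℕ) (ξ : EuclideanSpace ℝ (Fin (d - 1))) : ℝ :=
  ∑ i : Fin (d - 1), (if (i : ℕ) < d - 1 - m then (1 : ℝ) else -1) * ξ i ^ 2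

/-- The point `(ξ, ⟨Mξ, ξ⟩) ∈ ℝ^d` on the hyperbolic paraboloid. -/
def hypLift (d m : ℕ) (ξ : EuclideanSpace ℝ (Fin (d - 1))) : EuclideanSpace ℝ (Fin d) :=
  (EuclideanSpace.equiv (Fin d) ℝ).symm
    (fun i => if h : (i : ℕ) < d - 1 then ξ ⟨i, h⟩ else hypQ d m ξ)

/-- The Fourier transform `μ̂(ζ) = ∫ e^{-i x·ζ} dμ(x)` of a measure on `ℝ^d`. -/
def ftM {d : ℕ} (μ : Measure (EuclideanSpace ℝ (Fin d))) (ζ : EuclideanSpace ℝ (Fin d)) : ℂ :=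
  ∫ x, Complex.exp (-(Complex.I * (((∑ i, x i * ζ i) : ℝ) : ℂ))) ∂μ

/-- The `α`-dimensional energy `I_α(μ) = ∬ |x-y|^{-α} dμ(x) dμ(y)`. -/
def energy {d : ℕ} (α : ℝ) (μ : Measure (EuclideanSpace ℝ (Fin d))) : ℝ≥0∞ :=
  ∫⁻ x, ∫⁻ y, ENNReal.ofReal (dist x y) ^ (-α) ∂μ ∂μ

/-- The hyperbolic average `∫_{B^{d-1}(0,1)} |μ̂(R(ξ,⟨Mξ,ξ⟩))|² √(1+4|ξ|²) dξ`. -/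
def hypAvg (d m : ℕ) (μ : Measure (EuclideanSpace ℝ (Fin d))) (R : ℝ) : ℝ :=
  ∫ ξ in ball (0 : EuclideanSpace ℝ (Fin (d - 1))) 1,
    ‖ftM μ (R • hypLift d m ξ)‖ ^ 2 * Real.sqrt (1 + 4 * ‖ξ‖ ^ 2)

/-- The decay estimate `∫_H |μ̂(Rξ)|² dσ(ξ) ≤ C R^{-β} I_α(μ)` holds with some constant `C`
uniformly over measures in `M_d` and all `R > 1`. -/
def decayBound (d m : ℕ) (α β : ℝ) : Prop :=
  ∃ C : ℝ, 0 < C ∧ ∀ μ : Measure (EuclideanSpace ℝ (Fin d)), IsFiniteMeasure μ →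
    μ ((closedBall 0 1)ᶜ) = 0 → ∀ R : ℝ, 1 < R →
    ENNReal.ofReal (hypAvg d m μ R) ≤ ENNReal.ofReal (C * R ^ (-β)) * energy α μ

/-- The decay estimate with exponent `β` fails for every constant `C > 0`: there is a measure
in `M_d` with finite positive `α`-energy and an `R > 1` violating the estimate. -/
def decayFails (d m : ℕ) (α β : ℝ) : Prop :=
  ∀ C : ℝ, 0 < C → ∃ μ : Measure (EuclideanSpace ℝ (Fin d)), IsFiniteMeasure μ ∧
    μ ((closedBall 0 1)ᶜ) = 0 ∧ 0 < energy α μ ∧ energy α μ ≠ ⊤ ∧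
    ∃ R : ℝ, 1 < R ∧ C * R ^ (-β) * (energy α μ).toReal < hypAvg d m μ R

section Gaussian

open Complex
open scoped RealInnerProductSpace

variable {V : Type*} [NormedAddCommGroup V]

/-- The unnormalised Gaussian `e^{-b‖x‖²}`, valued in `ℝ≥0∞` so that it can serve both as an
integrand and as the density of a measure. -/
def gaussWeight (b : ℝ) (x : V) : ℝ≥0∞ := ENNReal.ofReal (Real.exp (-b * ‖x‖ ^ 2))

@[fun_prop]
lemma continuous_gaussWeight (b : ℝ) : Continuous (gaussWeight b : V → ℝ≥0∞) :=
  ENNReal.continuous_ofReal.comp (by fun_prop)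

lemma gaussWeight_ne_zero (b : ℝ) (x : V) : gaussWeight b x ≠ 0 :=
  (ENNReal.ofReal_pos.2 (Real.exp_pos _)).ne'

lemma gaussWeight_ne_top (b : ℝ) (x : V) : gaussWeight b x ≠ ∞ :=
  ENNReal.ofReal_ne_top

lemma gaussWeight_le_one {b : ℝ} (hb : 0 ≤ b) (x : V) : gaussWeight b x ≤ 1 := by
  rw [gaussWeight, ENNReal.ofReal_le_one, Real.exp_le_one_iff, neg_mul, neg_nonpos]
  positivity

variable [MeasurableSpace V]

lemma isFiniteMeasure_withDensity_gaussWeight (ν : Measure V) [IsFiniteMeasure ν] {b : ℝ}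
    (hb : 0 ≤ b) : IsFiniteMeasure (ν.withDensity (gaussWeight b)) := by
  refine isFiniteMeasure_of_le ν ?_
  calc ν.withDensity (gaussWeight b) ≤ ν.withDensity 1 :=
        withDensity_mono (.of_forall (gaussWeight_le_one hb))
    _ = ν := withDensity_one

variable [BorelSpace V] [InnerProductSpace ℝ V]

lemma charFun_withDensity_gaussWeight (ν : Measure V) (b : ℝ) (ζ : V) :
    charFun (ν.withDensity (gaussWeight b)) ζ =
      ∫ x, (Real.exp (-b * ‖x‖ ^ 2) : ℂ) * cexp (⟪x, ζ⟫ * I) ∂ν := by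
  rw [charFun_apply, integral_withDensity_eq_integral_toReal_smul
    (continuous_gaussWeight b).measurable (.of_forall fun x => (gaussWeight_ne_top b x).lt_top)]
  refine integral_congr_ae (.of_forall fun x => ?_)
  simp only [gaussWeight, ENNReal.toReal_ofReal (Real.exp_pos _).le, Complex.real_smul]

variable [FiniteDimensional ℝ V]

lemma integrable_exp_neg_mul_sq_norm {b : ℝ} (hb : 0 < b) :
    Integrable fun η : V => Real.exp (-b * ‖η‖ ^ 2) := by
  have h := (GaussianFourier.integrable_cexp_neg_mul_sq_norm_add (V := V) (b := b) (by simpa) 0 0)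
  simpa [Complex.norm_exp, ← Complex.ofReal_pow] using h.norm

lemma lintegral_gaussWeight {b : ℝ} (hb : 0 < b) :
    ∫⁻ η : V, gaussWeight b η =
      ENNReal.ofReal ((Real.pi / b) ^ (Module.finrank ℝ V / 2 : ℝ)) := by
  rw [← GaussianFourier.integral_rexp_neg_mul_sq_norm hb, ofReal_integral_eq_lintegral_ofReal
    (integrable_exp_neg_mul_sq_norm hb) (.of_forall fun x => (Real.exp_pos _).le)]
  rfl

lemma integral_exp_mul_charFun_add (ν : Measure V) [IsFiniteMeasure ν] {b : ℝ} (hb : 0 < b)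
    (ζ : V) :
    ∫ η : V, (Real.exp (-b * ‖η‖ ^ 2) : ℂ) * charFun ν (ζ + η) =
      ((Real.pi / b) ^ (Module.finrank ℝ V / 2 : ℝ) : ℝ) *
        charFun (ν.withDensity (gaussWeight (4 * b)⁻¹)) ζ := by
  have hint : Integrable (Function.uncurry fun η x : V =>
      (Real.exp (-b * ‖η‖ ^ 2) : ℂ) * cexp (⟪x, ζ + η⟫ * I)) (volume.prod ν) := by
    refine ((integrable_exp_neg_mul_sq_norm (V := V) hb).comp_fst ν).mono'
      (Continuous.aestronglyMeasurable (by unfold Function.uncurry; fun_prop))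
      (.of_forall fun p => ?_)
    simp [Function.uncurry, Complex.norm_exp, -Complex.ofReal_pow]
  have hphase (x η : V) : (Real.exp (-b * ‖η‖ ^ 2) : ℂ) * cexp (⟪x, ζ + η⟫ * I) =
      cexp (⟪x, ζ⟫ * I) * cexp (-(b : ℂ) * ‖η‖ ^ 2 + I * ⟪x, η⟫) := by
    rw [inner_add_right, Complex.ofReal_exp, ← Complex.exp_add, ← Complex.exp_add]
    congr 1
    push_cast
    ring
  have hgauss (x : V) : ∫ η : V, (Real.exp (-b * ‖η‖ ^ 2) : ℂ) * cexp (⟪x, ζ + η⟫ * I) =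
      ((Real.pi / b) ^ (Module.finrank ℝ V / 2 : ℝ) : ℝ) *
        ((Real.exp (-(4 * b)⁻¹ * ‖x‖ ^ 2) : ℂ) * cexp (⟪x, ζ⟫ * I)) := by
    simp_rw [hphase]
    rw [integral_const_mul,
      GaussianFourier.integral_cexp_neg_mul_sq_norm_add (V := V) (b := b) (by simpa) I x,
      Complex.ofReal_cpow (by positivity), I_sq]
    push_cast
    ring_nf
  simp_rw [charFun_apply (μ := ν), ← integral_const_mul]
  rw [integral_integral_swap hint, integral_congr_ae (.of_forall hgauss), integral_const_mul,
    charFun_withDensity_gaussWeight]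

lemma charFun_conv_map_neg (ν : Measure V) [IsFiniteMeasure ν] (t : V) :
    charFun (ν ∗ ν.map (fun x => (-1 : ℝ) • x)) t = ((‖charFun ν t‖ ^ 2 : ℝ) : ℂ) := by
  rw [charFun_conv, charFun_map_smul, neg_smul, one_smul, charFun_neg, Complex.mul_conj,
    Complex.normSq_eq_norm_sq]

lemma integrable_exp_mul_norm_charFun_sq (ν : Measure V) [IsFiniteMeasure ν] {b : ℝ}
    (hb : 0 < b) : Integrable fun η : V => Real.exp (-b * ‖η‖ ^ 2) * ‖charFun ν η‖ ^ 2 := by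
  refine (integrable_exp_neg_mul_sq_norm hb).mul_bdd (c := ν.real Set.univ ^ 2)
    (measurable_charFun.norm.pow_const 2).aestronglyMeasurable (.of_forall fun x => ?_)
  rw [norm_pow, norm_norm]
  gcongr
  exact norm_charFun_le x

/-- This is `integral_exp_mul_charFun_add` at `0` for the convolution of `ν` with its reflection,
whose characteristic function is `|charFun ν|²`. -/
lemma lintegral_gaussWeight_mul_enorm_charFun_sq (ν : Measure V) [IsFiniteMeasure ν] {b : ℝ}
    (hb : 0 < b) :
    ∫⁻ η : V, gaussWeight b η * ‖charFun ν η‖ₑ ^ 2 =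
      ENNReal.ofReal ((Real.pi / b) ^ (Module.finrank ℝ V / 2 : ℝ)) *
        ∫⁻ x, ∫⁻ y, gaussWeight (4 * b)⁻¹ (x - y) ∂ν ∂ν := by
  set ρ : Measure V := ν ∗ ν.map (fun x => (-1 : ℝ) • x) with hρ
  have := isFiniteMeasure_withDensity_gaussWeight ρ (b := (4 * b)⁻¹) (by positivity)
  have hdual : ∫ η : V, Real.exp (-b * ‖η‖ ^ 2) * ‖charFun ν η‖ ^ 2 =
      (Real.pi / b) ^ (Module.finrank ℝ V / 2 : ℝ) *
        (ρ.withDensity (gaussWeight (4 * b)⁻¹)).real Set.univ := by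
    have h := integral_exp_mul_charFun_add ρ hb 0
    simp only [zero_add, hρ, charFun_conv_map_neg, charFun_zero, ← Complex.ofReal_mul] at h
    rwa [integral_complex_ofReal, Complex.ofReal_inj] at h
  have hmass : ENNReal.ofReal ((ρ.withDensity (gaussWeight (4 * b)⁻¹)).real Set.univ) =
      ∫⁻ x, ∫⁻ y, gaussWeight (4 * b)⁻¹ (x - y) ∂ν ∂ν := by
    rw [ofReal_measureReal, withDensity_apply _ .univ, Measure.restrict_univ, hρ,
      Measure.lintegral_conv (by fun_prop)]
    refine lintegral_congr fun x => ?_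
    rw [lintegral_map (by fun_prop) (by fun_prop)]
    simp only [neg_smul, one_smul, sub_eq_add_neg]
  rw [← hmass, ← ENNReal.ofReal_mul (by positivity), ← hdual, ofReal_integral_eq_lintegral_ofReal
    (integrable_exp_mul_norm_charFun_sq ν hb) (.of_forall fun x => by positivity)]
  refine lintegral_congr fun η => ?_
  rw [ENNReal.ofReal_mul (Real.exp_pos _).le, ENNReal.ofReal_pow (norm_nonneg _), ofReal_norm]
  rfl

lemma lintegral_sq_le_measure_univ_mul {Ω : Type*} [MeasurableSpace Ω] (μ : Measure Ω)
    {f : Ω → ℝ≥0∞} (hf : AEMeasurable f μ) :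
    (∫⁻ x, f x ∂μ) ^ 2 ≤ μ Set.univ * ∫⁻ x, f x ^ 2 ∂μ := by
  have h := ENNReal.lintegral_mul_le_Lp_mul_Lq μ Real.HolderConjugate.two_two
    (aemeasurable_const (b := (1 : ℝ≥0∞))) hf
  simp only [Pi.mul_apply, one_mul, one_pow, lintegral_const, ENNReal.rpow_two] at h
  calc (∫⁻ x, f x ∂μ) ^ 2 ≤ (μ Set.univ ^ (1 / 2 : ℝ) * (∫⁻ x, f x ^ 2 ∂μ) ^ (1 / 2 : ℝ)) ^ 2 := by
        gcongr
    _ = μ Set.univ * ∫⁻ x, f x ^ 2 ∂μ := by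
        rw [← ENNReal.mul_rpow_of_nonneg _ _ (by norm_num), ← ENNReal.rpow_natCast,
          ← ENNReal.rpow_mul]
        norm_num

lemma lintegral_gaussWeight_mul_sq_le {b : ℝ} (hb : 0 < b) {f : V → ℝ≥0∞} (hf : Measurable f) :
    (∫⁻ η, gaussWeight b η * f η) ^ 2 ≤
      ENNReal.ofReal ((Real.pi / b) ^ (Module.finrank ℝ V / 2 : ℝ)) *
        ∫⁻ η, gaussWeight b η * f η ^ 2 := by
  have h := lintegral_sq_le_measure_univ_mul ((volume : Measure V).withDensity (gaussWeight b))
    hf.aemeasurable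
  have hw : Measurable (gaussWeight b : V → ℝ≥0∞) := (continuous_gaussWeight b).measurable
  rwa [withDensity_apply _ .univ, Measure.restrict_univ, lintegral_gaussWeight hb,
    lintegral_withDensity_eq_lintegral_mul _ hw hf,
    lintegral_withDensity_eq_lintegral_mul _ hw (hf.pow_const 2)] at h

lemma enorm_charFun_withDensity_gaussWeight_sq_le (ν : Measure V) [IsFiniteMeasure ν] {b : ℝ}
    (hb : 0 < b) (ζ : V) :
    ENNReal.ofReal ((Real.pi / b) ^ (Module.finrank ℝ V / 2 : ℝ)) *
        ‖charFun (ν.withDensity (gaussWeight (4 * b)⁻¹)) ζ‖ₑ ^ 2 ≤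
      ∫⁻ η : V, gaussWeight b η * ‖charFun ν (ζ + η)‖ₑ ^ 2 := by
  set G : ℝ := (Real.pi / b) ^ (Module.finrank ℝ V / 2 : ℝ)
  set z := charFun (ν.withDensity (gaussWeight (4 * b)⁻¹)) ζ
  have hG : 0 < G := by positivity
  have hG0 : ENNReal.ofReal G ≠ 0 := (ENNReal.ofReal_pos.2 hG).ne'
  have hmean : ENNReal.ofReal G * ‖z‖ₑ ≤ ∫⁻ η : V, gaussWeight b η * ‖charFun ν (ζ + η)‖ₑ :=
    calc ENNReal.ofReal G * ‖z‖ₑ = ‖(G : ℂ) * z‖ₑ := by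
          rw [enorm_mul, ← ofReal_norm (G : ℂ), Complex.norm_real, Real.norm_of_nonneg hG.le]
      _ ≤ ∫⁻ η : V, ‖(Real.exp (-b * ‖η‖ ^ 2) : ℂ) * charFun ν (ζ + η)‖ₑ := by
          rw [← integral_exp_mul_charFun_add ν hb ζ]
          exact enorm_integral_le_lintegral_enorm _
      _ = ∫⁻ η : V, gaussWeight b η * ‖charFun ν (ζ + η)‖ₑ := by
          refine lintegral_congr fun η => ?_
          rw [enorm_mul, ← ofReal_norm (Complex.ofReal _), Complex.norm_real,
            Real.norm_of_nonneg (Real.exp_pos _).le, gaussWeight]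
  have hsq := (pow_le_pow_left' hmean 2).trans (lintegral_gaussWeight_mul_sq_le hb
    (measurable_charFun.comp (measurable_const_add ζ)).enorm)
  rw [mul_pow, sq (ENNReal.ofReal G), mul_assoc] at hsq
  exact (ENNReal.mul_le_mul_iff_right hG0 ENNReal.ofReal_ne_top).1 hsq

end Gaussian

section UpperBound

variable {V W : Type*} [NormedAddCommGroup V] [NormedAddCommGroup W]

lemma inv_gaussWeight (b : ℝ) (x : V) : (gaussWeight b x)⁻¹ = gaussWeight (-b) x := by
  rw [gaussWeight, gaussWeight, ← ENNReal.ofReal_inv_of_pos (Real.exp_pos _), ← Real.exp_neg,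
    neg_mul, neg_mul, neg_mul]

lemma exists_withDensity_gaussWeight_eq [MeasurableSpace V] [OpensMeasurableSpace V]
    (μ : Measure V) [IsFiniteMeasure μ] {b r : ℝ} (hb : 0 ≤ b) (hμ : μ (closedBall 0 r)ᶜ = 0) :
    ∃ ν : Measure V, IsFiniteMeasure ν ∧ ν ≤ ENNReal.ofReal (Real.exp (b * r ^ 2)) • μ ∧
      ν.withDensity (gaussWeight b) = μ := by
  have hle : μ.withDensity (gaussWeight (-b)) ≤ ENNReal.ofReal (Real.exp (b * r ^ 2)) • μ := by
    rw [← withDensity_const]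
    refine withDensity_mono ?_
    filter_upwards [mem_ae_iff.2 hμ] with x hx
    rw [gaussWeight, neg_neg]
    gcongr
    exact mem_closedBall_zero_iff.1 hx
  refine ⟨_, ⟨(hle _).trans_lt ?_⟩, hle, ?_⟩
  · exact ENNReal.mul_lt_top ENNReal.ofReal_lt_top (measure_lt_top _ _)
  · have hinv : (gaussWeight b : V → ℝ≥0∞) = (gaussWeight (-b))⁻¹ := by
      ext x
      rw [Pi.inv_apply, inv_gaussWeight, neg_neg]
    rw [hinv]
    exact withDensity_inv_same (continuous_gaussWeight _).measurable
      (.of_forall (gaussWeight_ne_zero _)) (.of_forall (gaussWeight_ne_top _))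

lemma rpow_le_rpow_mul_exp {a u : ℝ} (ha : 0 < a) (hu : 0 ≤ u) :
    u ^ a ≤ a ^ a * Real.exp u := by
  have hu' : u ≤ a * Real.exp (u / a) := by
    rw [mul_comm, ← div_le_iff₀ ha]
    linarith [Real.add_one_le_exp (u / a)]
  calc u ^ a ≤ (a * Real.exp (u / a)) ^ a := by gcongr
    _ = a ^ a * Real.exp u := by
      rw [Real.mul_rpow ha.le (Real.exp_pos _).le, ← Real.exp_mul, div_mul_cancel₀ _ ha.ne']

lemma gaussWeight_le_rpow_neg {α b : ℝ} (hα : 0 < α) (hb : 0 < b) (x : V) :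
    gaussWeight b x ≤
      ENNReal.ofReal ((α / (2 * b)) ^ (α / 2)) * ENNReal.ofReal ‖x‖ ^ (-α) := by
  rcases (norm_nonneg x).eq_or_lt with hx | hx
  · rw [← hx, ENNReal.ofReal_zero, ENNReal.zero_rpow_of_neg (neg_lt_zero.2 hα), ENNReal.mul_top
      (ENNReal.ofReal_pos.2 (by positivity)).ne']
    exact le_top
  rw [ENNReal.ofReal_rpow_of_pos hx, ← ENNReal.ofReal_mul (by positivity), gaussWeight]
  refine ENNReal.ofReal_le_ofReal ?_
  have hpow : ‖x‖ ^ α ≤ (α / (2 * b)) ^ (α / 2) * Real.exp (b * ‖x‖ ^ 2) :=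
    calc ‖x‖ ^ α = (b⁻¹ * (b * ‖x‖ ^ 2)) ^ (α / 2) := by
          rw [inv_mul_cancel_left₀ hb.ne', ← Real.rpow_natCast, ← Real.rpow_mul hx.le]
          congr 1
          push_cast
          ring
      _ ≤ b⁻¹ ^ (α / 2) * ((α / 2) ^ (α / 2) * Real.exp (b * ‖x‖ ^ 2)) := by
          rw [Real.mul_rpow (by positivity) (by positivity)]
          gcongr
          exact rpow_le_rpow_mul_exp (by positivity) (by positivity)
      _ = (α / (2 * b)) ^ (α / 2) * Real.exp (b * ‖x‖ ^ 2) := by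
          rw [← mul_assoc, ← Real.mul_rpow (by positivity) (by positivity)]
          congr 2
          field_simp
  rw [Real.rpow_neg hx.le, ← div_eq_mul_inv, le_div_iff₀ (by positivity), neg_mul, Real.exp_neg,
    inv_mul_le_iff₀ (Real.exp_pos _)]
  linarith

variable [InnerProductSpace ℝ V] [InnerProductSpace ℝ W]

lemma gaussWeight_sub_smul_le {P : V →ₗ[ℝ] W} (hP : ∀ x, ‖P x‖ ≤ ‖x‖) {v : V} {ρ R : ℝ}
    (hv : ‖v‖ ≤ ρ) (hR : 1 ≤ R) (η : V) :
    gaussWeight 2⁻¹ (η - R • v) ≤ ENNReal.ofReal (Real.exp (ρ ^ 2 / 4)) *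
      gaussWeight (8 * R ^ 2)⁻¹ η * gaussWeight (R ^ 2 / 4) (P v - R⁻¹ • P η) := by
  have hR0 : 0 < R := by linarith
  set D := ‖η - R • v‖
  have hproj : R ^ 2 * ‖P v - R⁻¹ • P η‖ ^ 2 ≤ D ^ 2 := by
    have h : R • (P v - R⁻¹ • P η) = -P (η - R • v) := by
      rw [smul_sub, smul_inv_smul₀ hR0.ne', map_sub, map_smul, neg_sub]
    rw [← mul_pow, ← norm_smul_of_nonneg hR0.le, h, norm_neg]
    gcongr
    exact hP _
  have hnorm : ‖η‖ ^ 2 ≤ 2 * D ^ 2 + 2 * (R * ρ) ^ 2 := by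
    have h : ‖η‖ ≤ D + R * ρ := by
      calc ‖η‖ ≤ ‖η - R • v‖ + ‖R • v‖ := norm_le_norm_sub_add _ _
        _ ≤ D + R * ρ := by rw [norm_smul, Real.norm_of_nonneg hR0.le]; gcongr
    nlinarith [norm_nonneg η, sq_nonneg (D - R * ρ)]
  have htail : (8 * R ^ 2)⁻¹ * ‖η‖ ^ 2 ≤ D ^ 2 / 4 + ρ ^ 2 / 4 := by
    rw [inv_mul_le_iff₀ (by positivity)]
    nlinarith [sq_nonneg D, sq_nonneg ρ, one_le_pow₀ hR (n := 2)]
  simp only [gaussWeight]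
  rw [← ENNReal.ofReal_mul (Real.exp_pos _).le, ← Real.exp_add, ← ENNReal.ofReal_mul
    (Real.exp_pos _).le, ← Real.exp_add]
  gcongr
  linarith

variable [FiniteDimensional ℝ W] [MeasurableSpace W] [BorelSpace W]

lemma lintegral_gaussWeight_sub_smul_le {P : V →ₗ[ℝ] W} (hP : ∀ x, ‖P x‖ ≤ ‖x‖) {φ : W → V}
    {S : Set W} (hS : MeasurableSet S) (hPφ : ∀ ξ ∈ S, P (φ ξ) = ξ) {ρ R : ℝ}
    (hφ : ∀ ξ ∈ S, ‖φ ξ‖ ≤ ρ) (hR : 1 ≤ R) (η : V) :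
    ∫⁻ ξ in S, gaussWeight 2⁻¹ (η - R • φ ξ) ≤
      ENNReal.ofReal (Real.exp (ρ ^ 2 / 4) *
        (Real.pi / (R ^ 2 / 4)) ^ (Module.finrank ℝ W / 2 : ℝ)) * gaussWeight (8 * R ^ 2)⁻¹ η := by
  set A := ENNReal.ofReal (Real.exp (ρ ^ 2 / 4)) * gaussWeight (8 * R ^ 2)⁻¹ η
  have hb : 0 < R ^ 2 / 4 := by positivity
  calc ∫⁻ ξ in S, gaussWeight 2⁻¹ (η - R • φ ξ)
      ≤ ∫⁻ ξ in S, A * gaussWeight (R ^ 2 / 4) (ξ - R⁻¹ • P η) := by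
        refine setLIntegral_mono' hS fun ξ hξ => ?_
        simpa only [hPφ ξ hξ] using gaussWeight_sub_smul_le hP (hφ ξ hξ) hR η
    _ ≤ ∫⁻ ξ, A * gaussWeight (R ^ 2 / 4) (ξ - R⁻¹ • P η) := setLIntegral_le_lintegral _ _
    _ = A * ENNReal.ofReal ((Real.pi / (R ^ 2 / 4)) ^ (Module.finrank ℝ W / 2 : ℝ)) := by
        rw [lintegral_const_mul _ (Continuous.measurable (by fun_prop)),
          lintegral_sub_right_eq_self (gaussWeight (R ^ 2 / 4)), lintegral_gaussWeight hb]
    _ = _ := by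
        rw [ENNReal.ofReal_mul (Real.exp_pos _).le]
        ring

variable [FiniteDimensional ℝ V] [MeasurableSpace V] [BorelSpace V]

lemma lintegral_gaussWeight_mul_enorm_charFun_sq_le (ν : Measure V) [IsFiniteMeasure ν]
    {α b : ℝ} (hα : 0 < α) (hb : 0 < b) :
    ∫⁻ η : V, gaussWeight b η * ‖charFun ν η‖ₑ ^ 2 ≤
      ENNReal.ofReal ((Real.pi / b) ^ (Module.finrank ℝ V / 2 : ℝ) * (2 * α * b) ^ (α / 2)) *
        ∫⁻ x, ∫⁻ y, ENNReal.ofReal (dist x y) ^ (-α) ∂ν ∂ν := by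
  rw [lintegral_gaussWeight_mul_enorm_charFun_sq ν hb, ENNReal.ofReal_mul (by positivity),
    mul_assoc]
  gcongr ENNReal.ofReal _ * ?_
  rw [← lintegral_const_mul' _ _ ENNReal.ofReal_ne_top]
  gcongr with x
  rw [← lintegral_const_mul' _ _ ENNReal.ofReal_ne_top]
  gcongr with y
  have h := gaussWeight_le_rpow_neg hα (inv_pos.2 (mul_pos four_pos hb)) (x - y)
  rwa [show α / (2 * (4 * b)⁻¹) = 2 * α * b by field_simp; norm_num, ← dist_eq_norm] at h

lemma lintegral_enorm_charFun_graph_sq_le (ν : Measure V) [IsFiniteMeasure ν]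
    {P : V →ₗ[ℝ] W} (hP : ∀ x, ‖P x‖ ≤ ‖x‖) {φ : W → V} (hφm : Measurable φ)
    {S : Set W} (hS : MeasurableSet S) (hPφ : ∀ ξ ∈ S, P (φ ξ) = ξ) {ρ R : ℝ}
    (hφ : ∀ ξ ∈ S, ‖φ ξ‖ ≤ ρ) (hR : 1 ≤ R) :
    ENNReal.ofReal ((2 * Real.pi) ^ (Module.finrank ℝ V / 2 : ℝ)) *
        ∫⁻ ξ in S, ‖charFun (ν.withDensity (gaussWeight 2⁻¹)) (R • φ ξ)‖ₑ ^ 2 ≤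
      ENNReal.ofReal (Real.exp (ρ ^ 2 / 4) *
        (Real.pi / (R ^ 2 / 4)) ^ (Module.finrank ℝ W / 2 : ℝ)) *
          ∫⁻ η, gaussWeight (8 * R ^ 2)⁻¹ η * ‖charFun ν η‖ₑ ^ 2 := by
  have hF : Measurable fun η => ‖charFun ν η‖ₑ ^ 2 := measurable_charFun.enorm.pow_const 2
  have hw : Measurable fun p : W × V => gaussWeight 2⁻¹ (p.2 - R • φ p.1) :=
    (continuous_gaussWeight _).measurable.comp (by fun_prop)
  have havg (ξ : W) : ENNReal.ofReal ((2 * Real.pi) ^ (Module.finrank ℝ V / 2 : ℝ)) *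
      ‖charFun (ν.withDensity (gaussWeight 2⁻¹)) (R • φ ξ)‖ₑ ^ 2 ≤
        ∫⁻ η, gaussWeight 2⁻¹ (η - R • φ ξ) * ‖charFun ν η‖ₑ ^ 2 := by
    have h := enorm_charFun_withDensity_gaussWeight_sq_le ν (b := 2⁻¹) (by norm_num) (R • φ ξ)
    rw [show (4 * 2⁻¹ : ℝ)⁻¹ = 2⁻¹ by norm_num, div_inv_eq_mul, mul_comm Real.pi] at h
    rw [← lintegral_add_left_eq_self _ (R • φ ξ)]
    simpa only [add_sub_cancel_left] using h
  have hM : Measurable fun p : W × V =>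
      gaussWeight 2⁻¹ (p.2 - R • φ p.1) * ‖charFun ν p.2‖ₑ ^ 2 := hw.mul (hF.comp measurable_snd)
  rw [← lintegral_const_mul' _ _ ENNReal.ofReal_ne_top,
    ← lintegral_const_mul' _ _ ENNReal.ofReal_ne_top]
  calc _ ≤ ∫⁻ ξ in S, ∫⁻ η, gaussWeight 2⁻¹ (η - R • φ ξ) * ‖charFun ν η‖ₑ ^ 2 :=
        lintegral_mono havg
    _ = ∫⁻ η, (∫⁻ ξ in S, gaussWeight 2⁻¹ (η - R • φ ξ)) * ‖charFun ν η‖ₑ ^ 2 := by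
        rw [lintegral_lintegral_swap hM.aemeasurable]
        exact lintegral_congr fun η =>
          lintegral_mul_const' _ _ (ENNReal.pow_ne_top enorm_ne_top)
    _ ≤ _ := by
        refine lintegral_mono fun η => ?_
        rw [← mul_assoc]
        gcongr
        exact lintegral_gaussWeight_sub_smul_le hP hS hPφ hφ hR η

lemma mul_sq_rpow_div_two {a R : ℝ} (ha : 0 ≤ a) (hR : 0 ≤ R) (s : ℝ) :
    (a * R ^ 2) ^ (s / 2) = a ^ (s / 2) * R ^ s := by
  rw [Real.mul_rpow ha (sq_nonneg R), ← Real.rpow_natCast, ← Real.rpow_mul hR]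
  congr 2
  push_cast
  ring

lemma exists_lintegral_enorm_charFun_graph_sq_le_energy {P : V →ₗ[ℝ] W}
    (hP : ∀ x, ‖P x‖ ≤ ‖x‖) {φ : W → V} (hφm : Measurable φ) {S : Set W} (hS : MeasurableSet S)
    (hPφ : ∀ ξ ∈ S, P (φ ξ) = ξ) {ρ α : ℝ} (hφ : ∀ ξ ∈ S, ‖φ ξ‖ ≤ ρ) (hα : 0 < α) :
    ∃ C : ℝ, 0 < C ∧ ∀ ν : Measure V, IsFiniteMeasure ν → ∀ R : ℝ, 1 ≤ R →
      ∫⁻ ξ in S, ‖charFun (ν.withDensity (gaussWeight 2⁻¹)) (R • φ ξ)‖ₑ ^ 2 ≤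
        ENNReal.ofReal (C * R ^ (Module.finrank ℝ V - Module.finrank ℝ W - α : ℝ)) *
          ∫⁻ x, ∫⁻ y, ENNReal.ofReal (dist x y) ^ (-α) ∂ν ∂ν := by
  obtain ⟨v, hv⟩ : ∃ v : ℝ, v = Module.finrank ℝ V := ⟨_, rfl⟩
  obtain ⟨w, hw⟩ : ∃ w : ℝ, w = Module.finrank ℝ W := ⟨_, rfl⟩
  set G : ℝ := (2 * Real.pi) ^ (v / 2) with hGdef
  set C₁ : ℝ := Real.exp (ρ ^ 2 / 4) * (4 * Real.pi) ^ (w / 2)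
  set C₂ : ℝ := (8 * Real.pi) ^ (v / 2) * (α / 4) ^ (α / 2)
  have hG : 0 < G := by positivity
  refine ⟨G⁻¹ * (C₁ * C₂), by positivity, fun ν _ R hR => ?_⟩
  have hR0 : 0 < R := by linarith
  have hR1 : 0 ≤ R⁻¹ := by positivity
  have hgraph := (lintegral_enorm_charFun_graph_sq_le ν hP hφm hS hPφ hφ hR).trans
    (mul_le_mul_right (lintegral_gaussWeight_mul_enorm_charFun_sq_le ν hα
      (b := (8 * R ^ 2)⁻¹) (by positivity)) _)
  rw [← hv, ← hw, ← hGdef,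
    show Real.pi / (R ^ 2 / 4) = 4 * Real.pi * R⁻¹ ^ 2 by field_simp,
    show Real.pi / (8 * R ^ 2)⁻¹ = 8 * Real.pi * R ^ 2 by field_simp,
    show 2 * α * (8 * R ^ 2)⁻¹ = α / 4 * R⁻¹ ^ 2 by field_simp; norm_num,
    mul_sq_rpow_div_two (by positivity) hR1, mul_sq_rpow_div_two (by positivity) hR0.le,
    mul_sq_rpow_div_two (by positivity) hR1, mul_comm, ← mul_assoc,
    ← ENNReal.ofReal_mul (by positivity)] at hgraph
  rw [← hv, ← hw, mul_assoc, ENNReal.ofReal_mul (by positivity), ENNReal.ofReal_inv_of_pos hG,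
    mul_assoc, ← ENNReal.mul_le_iff_le_inv (ENNReal.ofReal_pos.2 hG).ne' ENNReal.ofReal_ne_top,
    mul_comm]
  refine hgraph.trans_eq ?_
  congr 2
  rw [Real.rpow_sub hR0, Real.rpow_sub hR0, Real.inv_rpow hR0.le, Real.inv_rpow hR0.le]
  ring

end UpperBound

section Paraboloid

open scoped RealInnerProductSpace

variable {n m d : ℕ}

/-- The projection `ℝⁿ⁺¹ → ℝⁿ` forgetting the last coordinate, of which `hypLift` is a section. -/
def initProj (n : ℕ) :
    EuclideanSpace ℝ (Fin (n + 1)) →ₗ[ℝ] EuclideanSpace ℝ (Fin n) where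
  toFun x := WithLp.toLp 2 (Fin.init x)
  map_add' _ _ := rfl
  map_smul' _ _ := rfl

@[simp]
lemma initProj_apply (x : EuclideanSpace ℝ (Fin (n + 1))) (i : Fin n) :
    initProj n x i = x i.castSucc := rfl

lemma norm_sq_eq_norm_initProj_sq_add (x : EuclideanSpace ℝ (Fin (n + 1))) :
    ‖x‖ ^ 2 = ‖initProj n x‖ ^ 2 + x (Fin.last n) ^ 2 := by
  simp only [EuclideanSpace.real_norm_sq_eq, Fin.sum_univ_castSucc, initProj_apply]

lemma norm_initProj_le (x : EuclideanSpace ℝ (Fin (n + 1))) : ‖initProj n x‖ ≤ ‖x‖ := by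
  refine (sq_le_sq₀ (norm_nonneg _) (norm_nonneg _)).1 ?_
  rw [norm_sq_eq_norm_initProj_sq_add]
  exact le_add_of_nonneg_right (sq_nonneg _)

lemma inner_eq_inner_initProj_add (x y : EuclideanSpace ℝ (Fin (n + 1))) :
    ⟪x, y⟫ = ⟪initProj n x, initProj n y⟫ + x (Fin.last n) * y (Fin.last n) := by
  simp only [PiLp.inner_apply, RCLike.inner_apply, conj_trivial, Fin.sum_univ_castSucc,
    initProj_apply, mul_comm]

lemma initProj_hypLift (ξ : EuclideanSpace ℝ (Fin n)) :
    initProj n (hypLift (n + 1) m ξ) = ξ := by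
  ext i
  simp [hypLift]

lemma hypLift_last (ξ : EuclideanSpace ℝ (Fin n)) :
    hypLift (n + 1) m ξ (Fin.last n) = hypQ (n + 1) m ξ := by
  simp [hypLift]

lemma continuous_hypLift : Continuous (hypLift d m) := by
  refine (EuclideanSpace.equiv (Fin d) ℝ).symm.continuous.comp (continuous_pi fun i => ?_)
  split_ifs
  · fun_prop
  · unfold hypQ
    fun_prop

/-- The diagonal matrix `M` as a linear isometry. -/
def hypM (d m : ℕ) : EuclideanSpace ℝ (Fin (d - 1)) →ₗᵢ[ℝ] EuclideanSpace ℝ (Fin (d - 1)) where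
  toFun ξ := WithLp.toLp 2 fun i => (if (i : ℕ) < d - 1 - m then (1 : ℝ) else -1) * ξ i
  map_add' ξ η := by
    ext i
    exact mul_add _ _ _
  map_smul' t ξ := by
    ext i
    exact mul_left_comm _ _ _
  norm_map' ξ := by
    simp only [LinearMap.coe_mk, AddHom.coe_mk, EuclideanSpace.norm_eq, norm_mul, apply_ite norm,
      norm_neg, norm_one, ite_self, one_mul]

@[simp]
lemma hypM_apply (ξ : EuclideanSpace ℝ (Fin (d - 1))) (i : Fin (d - 1)) :
    hypM d m ξ i = (if (i : ℕ) < d - 1 - m then (1 : ℝ) else -1) * ξ i := rfl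

lemma hypQ_sub_hypQ (ξ η : EuclideanSpace ℝ (Fin (d - 1))) :
    hypQ d m ξ - hypQ d m η = ⟪hypM d m (ξ - η), ξ + η⟫ := by
  simp only [hypQ, PiLp.inner_apply, RCLike.inner_apply, conj_trivial, hypM_apply, PiLp.add_apply,
    PiLp.sub_apply, ← Finset.sum_sub_distrib]
  exact Finset.sum_congr rfl fun i _ => by ring

lemma hypQ_zero : hypQ d m 0 = 0 := by
  simp [hypQ]

lemma hypQ_eq_inner (ξ : EuclideanSpace ℝ (Fin (d - 1))) : hypQ d m ξ = ⟪hypM d m ξ, ξ⟫ := by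
  simpa only [hypQ_zero, sub_zero, add_zero] using hypQ_sub_hypQ ξ 0

lemma abs_hypQ_sub_le (ξ η : EuclideanSpace ℝ (Fin (d - 1))) :
    |hypQ d m ξ - hypQ d m η| ≤ ‖ξ - η‖ * ‖ξ + η‖ := by
  rw [hypQ_sub_hypQ, ← (hypM d m).norm_map (ξ - η)]
  exact abs_real_inner_le_norm _ _

lemma norm_hypLift_le {ξ : EuclideanSpace ℝ (Fin n)} (hξ : ‖ξ‖ ≤ 1) :
    ‖hypLift (n + 1) m ξ‖ ≤ √2 := by
  have hQ : |hypQ (n + 1) m ξ| ≤ 1 := by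
    have h := abs_hypQ_sub_le (d := n + 1) (m := m) ξ 0
    rw [hypQ_zero, sub_zero, sub_zero, add_zero] at h
    exact h.trans (mul_le_one₀ hξ (norm_nonneg _) hξ)
  rw [← abs_of_nonneg (norm_nonneg (hypLift (n + 1) m ξ))]
  refine Real.abs_le_sqrt ?_
  rw [norm_sq_eq_norm_initProj_sq_add, initProj_hypLift, hypLift_last]
  linarith [(sq_le_one_iff_abs_le_one _).2 hQ, pow_le_one₀ (norm_nonneg ξ) hξ (n := 2)]

lemma ftM_eq_charFun_neg (μ : Measure (EuclideanSpace ℝ (Fin d))) (ζ : EuclideanSpace ℝ (Fin d)) :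
    ftM μ ζ = charFun μ (-ζ) := by
  rw [ftM, charFun_apply]
  refine integral_congr_ae (.of_forall fun x => ?_)
  have h : ⟪x, -ζ⟫ = -∑ i, x i * ζ i := by
    simp only [inner_neg_right, PiLp.inner_apply, RCLike.inner_apply, conj_trivial, mul_comm]
  simp only [h]
  push_cast
  ring_nf

lemma norm_ftM (μ : Measure (EuclideanSpace ℝ (Fin d))) (ζ : EuclideanSpace ℝ (Fin d)) :
    ‖ftM μ ζ‖ = ‖charFun μ ζ‖ := by
  rw [ftM_eq_charFun_neg, charFun_neg, RCLike.norm_conj]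

lemma integrableOn_norm_ftM_sq_mul (μ : Measure (EuclideanSpace ℝ (Fin d))) [IsFiniteMeasure μ]
    (R : ℝ) : IntegrableOn
      (fun ξ => ‖ftM μ (R • hypLift d m ξ)‖ ^ 2 * √(1 + 4 * ‖ξ‖ ^ 2)) (ball 0 1) := by
  simp only [norm_ftM]
  have hmeas : Measurable fun ξ => charFun μ (R • hypLift d m ξ) :=
    measurable_charFun.comp (continuous_hypLift.measurable.const_smul R)
  refine Measure.integrableOn_of_bounded (M := μ.real Set.univ ^ 2 * √5)
    measure_ball_lt_top.ne (Measurable.aestronglyMeasurable (by fun_prop)) ?_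
  filter_upwards [ae_restrict_mem measurableSet_ball] with ξ hξ
  rw [Real.norm_of_nonneg (by positivity)]
  gcongr
  · exact norm_charFun_le _
  · linarith [pow_le_one₀ (norm_nonneg ξ) (mem_ball_zero_iff.1 hξ).le (n := 2)]

lemma ofReal_hypAvg (μ : Measure (EuclideanSpace ℝ (Fin d))) [IsFiniteMeasure μ] (R : ℝ) :
    ENNReal.ofReal (hypAvg d m μ R) = ∫⁻ ξ in ball (0 : EuclideanSpace ℝ (Fin (d - 1))) 1,
      ‖charFun μ (R • hypLift d m ξ)‖ₑ ^ 2 * ENNReal.ofReal √(1 + 4 * ‖ξ‖ ^ 2) := by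
  rw [hypAvg, ofReal_integral_eq_lintegral_ofReal (integrableOn_norm_ftM_sq_mul μ R)
    (.of_forall fun ξ => by positivity)]
  refine lintegral_congr fun ξ => ?_
  rw [ENNReal.ofReal_mul (by positivity), ENNReal.ofReal_pow (norm_nonneg _), norm_ftM, ofReal_norm]

lemma energy_le_of_le_smul {α : ℝ} {μ ν : Measure (EuclideanSpace ℝ (Fin d))} [SFinite μ]
    {c : ℝ≥0∞} (h : ν ≤ c • μ) : energy α ν ≤ c * c * energy α μ := by
  have hmeas : Measurable fun p : EuclideanSpace ℝ (Fin d) × EuclideanSpace ℝ (Fin d) =>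
    ENNReal.ofReal (dist p.1 p.2) ^ (-α) := by fun_prop
  have hle (f : EuclideanSpace ℝ (Fin d) → ℝ≥0∞) : ∫⁻ x, f x ∂ν ≤ c * ∫⁻ x, f x ∂μ :=
    (lintegral_mono' h le_rfl).trans_eq (lintegral_smul_measure _ _)
  calc energy α ν ≤ ∫⁻ x, c * ∫⁻ y, ENNReal.ofReal (dist x y) ^ (-α) ∂μ ∂ν :=
        lintegral_mono fun x => hle _
    _ ≤ c * ∫⁻ x, c * ∫⁻ y, ENNReal.ofReal (dist x y) ^ (-α) ∂μ ∂μ := hle _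
    _ = c * c * energy α μ := by
        rw [lintegral_const_mul _ hmeas.lintegral_prod_right', mul_assoc, energy]

lemma decayBound_of_le {α β : ℝ} (hα : 0 < α) (hβ : β ≤ α - 1) : decayBound (n + 1) m α β := by
  obtain ⟨C, hC, hgraph⟩ := exists_lintegral_enorm_charFun_graph_sq_le_energy norm_initProj_le
    (continuous_hypLift (m := m)).measurable measurableSet_ball
    (fun ξ (_ : ξ ∈ ball (0 : EuclideanSpace ℝ (Fin n)) 1) => initProj_hypLift ξ)
    (fun ξ hξ => norm_hypLift_le (mem_ball_zero_iff.1 hξ).le) hα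
  set e := Real.exp (2⁻¹ * 1 ^ 2)
  refine ⟨√5 * C * (e * e), by positivity, fun μ _ hμ R hR => ?_⟩
  obtain ⟨ν, _, hνμ, hμν⟩ := exists_withDensity_gaussWeight_eq μ (b := 2⁻¹) (by norm_num) hμ
  have havg := hgraph ν inferInstance R hR.le
  rw [hμν] at havg
  simp only [finrank_euclideanSpace, Fintype.card_fin, Nat.cast_add, Nat.cast_one,
    add_sub_cancel_left] at havg
  calc ENNReal.ofReal (hypAvg (n + 1) m μ R)
      ≤ ∫⁻ ξ in ball (0 : EuclideanSpace ℝ (Fin n)) 1,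
          ‖charFun μ (R • hypLift (n + 1) m ξ)‖ₑ ^ 2 * ENNReal.ofReal √5 := by
        rw [ofReal_hypAvg]
        refine setLIntegral_mono' measurableSet_ball fun ξ hξ => ?_
        gcongr
        linarith [pow_le_one₀ (norm_nonneg ξ) (mem_ball_zero_iff.1 hξ).le (n := 2)]
    _ ≤ ENNReal.ofReal (C * R ^ (1 - α)) * energy α ν * ENNReal.ofReal √5 := by
        rw [lintegral_mul_const' _ _ ENNReal.ofReal_ne_top]
        gcongr
        exact havg
    _ ≤ ENNReal.ofReal (C * R ^ (-β)) * (ENNReal.ofReal e * ENNReal.ofReal e * energy α μ) *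
          ENNReal.ofReal √5 := by
        gcongr
        · exact hR.le
        · linarith
        · exact energy_le_of_le_smul hνμ
    _ = ENNReal.ofReal (√5 * C * (e * e) * R ^ (-β)) * energy α μ := by
        rw [show √5 * C * (e * e) * R ^ (-β) = C * R ^ (-β) * (e * e) * √5 by ring,
          ENNReal.ofReal_mul (q := √5) (by positivity),
          ENNReal.ofReal_mul (q := e * e) (by positivity),
          ENNReal.ofReal_mul (q := e) (by positivity)]
        ring

end Paraboloid

section OrthoBox

variable {n : ℕ} {V : Type*} [NormedAddCommGroup V] [InnerProductSpace ℝ V]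

lemma lintegral_pi_prod (μ : Fin n → Measure ℝ) [∀ i, SigmaFinite (μ i)]
    {f : Fin n → ℝ → ℝ≥0∞} (hf : ∀ i, Measurable (f i)) :
    ∫⁻ x, ∏ i, f i (x i) ∂Measure.pi μ = ∏ i, ∫⁻ t, f i t ∂μ i := by
  induction n with
  | zero => simp
  | succ n ih =>
    have hmeas (g : Fin (n + 1) → ℝ → ℝ≥0∞) (hg : ∀ i, Measurable (g i)) :
        Measurable fun x : Fin (n + 1) → ℝ => ∏ i, g i (x i) :=
      Finset.measurable_fun_prod _ fun i _ => (hg i).comp (measurable_pi_apply i)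
    rw [← (measurePreserving_piFinSuccAbove μ 0).symm.lintegral_comp (hmeas f hf),
      Fin.prod_univ_succ, ← ih _ fun i => hf i.succ,
      ← lintegral_prod_mul (hf 0).aemeasurable (Finset.measurable_fun_prod _ fun i _ =>
        (hf i.succ).comp (measurable_pi_apply i)).aemeasurable]
    simp only [MeasurableEquiv.piFinSuccAbove_symm_apply, Fin.insertNthEquiv, Fin.prod_univ_succ,
      Fin.insertNth_zero, Equiv.coe_fn_mk, Fin.cons_succ, Fin.zero_succAbove, Fin.cons_zero]
    rfl

/-- The box of half-widths `r` centred at the origin, with axes along the basis `b`. -/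
def orthoBox (b : OrthonormalBasis (Fin n) ℝ V) (r : Fin n → ℝ) : Set V :=
  {x | ∀ k, |b.repr x k| ≤ r k}

lemma isClosed_orthoBox (b : OrthonormalBasis (Fin n) ℝ V) (r : Fin n → ℝ) :
    IsClosed (orthoBox b r) := by
  simp only [orthoBox, Set.ofPred_forall]
  exact isClosed_iInter fun k => isClosed_le (by fun_prop) continuous_const

variable [MeasurableSpace V] [BorelSpace V]

lemma measurableSet_orthoBox (b : OrthonormalBasis (Fin n) ℝ V) (r : Fin n → ℝ) :
    MeasurableSet (orthoBox b r) :=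
  (isClosed_orthoBox b r).measurableSet

lemma setLIntegral_orthoBox_prod [FiniteDimensional ℝ V] (b : OrthonormalBasis (Fin n) ℝ V)
    (r : Fin n → ℝ) {f : Fin n → ℝ → ℝ≥0∞} (hf : ∀ k, Measurable (f k)) :
    ∫⁻ x in orthoBox b r, ∏ k, f k (b.repr x k) = ∏ k, ∫⁻ t in Set.Icc (-r k) (r k), f k t := by
  have hb : MeasurePreserving fun x : V => WithLp.ofLp (b.repr x) :=
    (PiLp.volume_preserving_ofLp (Fin n)).comp b.measurePreserving_repr
  have hbox : orthoBox b r = (fun x : V => WithLp.ofLp (b.repr x)) ⁻¹'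
      Set.univ.pi fun k => Set.Icc (-r k) (r k) := by
    ext x
    simp only [orthoBox, Set.mem_ofPred_eq, Set.mem_preimage, Set.mem_univ_pi, Set.mem_Icc, abs_le]
  rw [hbox, hb.setLIntegral_comp_preimage
    (f := fun y : Fin n → ℝ => ∏ k, f k (y k)) (.univ_pi fun _ => measurableSet_Icc)
    (Finset.measurable_fun_prod _ fun k _ => (hf k).comp (measurable_pi_apply k)),
    volume_pi, Measure.restrict_pi_pi, lintegral_pi_prod _ hf]

lemma volume_orthoBox [FiniteDimensional ℝ V] (b : OrthonormalBasis (Fin n) ℝ V) {r : Fin n → ℝ}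
    (hr : ∀ k, 0 ≤ r k) : volume (orthoBox b r) = ENNReal.ofReal (∏ k, 2 * r k) := by
  have h := setLIntegral_orthoBox_prod b r (f := fun _ _ => 1) fun _ => measurable_const
  simp only [Finset.prod_const_one, setLIntegral_one, Real.volume_Icc] at h
  rw [h, ENNReal.ofReal_prod_of_nonneg fun k _ => mul_nonneg zero_le_two (hr k)]
  exact Finset.prod_congr rfl fun k _ => by ring_nf

lemma setLIntegral_Icc_zero_abs_rpow_neg {a ρ : ℝ} (ha : a < 1) (hρ : 0 ≤ ρ) :
    ∫⁻ s in Set.Icc 0 ρ, ENNReal.ofReal |s| ^ (-a) = ENNReal.ofReal (ρ ^ (1 - a) / (1 - a)) := by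
  have hint : IntegrableOn (fun s : ℝ => s ^ (-a)) (Set.Ioc 0 ρ) :=
    (intervalIntegrable_iff_integrableOn_Ioc_of_le hρ).1
      (intervalIntegral.intervalIntegrable_rpow' (by linarith))
  calc ∫⁻ s in Set.Icc 0 ρ, ENNReal.ofReal |s| ^ (-a)
      = ∫⁻ s in Set.Ioc 0 ρ, ENNReal.ofReal (s ^ (-a)) := by
        rw [setLIntegral_congr Ioc_ae_eq_Icc.symm]
        refine setLIntegral_congr_fun measurableSet_Ioc fun s hs => ?_
        rw [abs_of_pos hs.1, ENNReal.ofReal_rpow_of_pos hs.1]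
    _ = ENNReal.ofReal (∫ s in 0..ρ, s ^ (-a)) := by
        rw [intervalIntegral.integral_of_le hρ, ofReal_integral_eq_lintegral_ofReal hint]
        filter_upwards [ae_restrict_mem measurableSet_Ioc] with s hs
        exact Real.rpow_nonneg hs.1.le _
    _ = ENNReal.ofReal (ρ ^ (1 - a) / (1 - a)) := by
        rw [integral_rpow (Or.inl (by linarith)), Real.zero_rpow (by linarith), sub_zero,
          neg_add_eq_sub]

lemma setLIntegral_Icc_abs_rpow_neg_le {a ρ : ℝ} (ha : a < 1) (hρ : 0 ≤ ρ) :
    ∫⁻ s in Set.Icc (-ρ) ρ, ENNReal.ofReal |s| ^ (-a) ≤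
      ENNReal.ofReal (2 * (ρ ^ (1 - a) / (1 - a))) := by
  have hreflect : ∫⁻ s in Set.Icc (-ρ) 0, ENNReal.ofReal |s| ^ (-a) =
      ∫⁻ s in Set.Icc 0 ρ, ENNReal.ofReal |s| ^ (-a) := by
    have h := (Measure.measurePreserving_neg (volume : Measure ℝ)).setLIntegral_comp_preimage
      (f := fun s => ENNReal.ofReal |s| ^ (-a)) (measurableSet_Icc (a := 0) (b := ρ)) (by fun_prop)
    simpa only [abs_neg, Set.neg_preimage, Set.neg_Icc, neg_zero] using h
  calc ∫⁻ s in Set.Icc (-ρ) ρ, ENNReal.ofReal |s| ^ (-a)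
      ≤ (∫⁻ s in Set.Icc (-ρ) 0, ENNReal.ofReal |s| ^ (-a)) +
          ∫⁻ s in Set.Icc 0 ρ, ENNReal.ofReal |s| ^ (-a) := by
        rw [← Set.Icc_union_Icc_eq_Icc (neg_nonpos.2 hρ) hρ]
        exact lintegral_union_le _ _ _
    _ = ENNReal.ofReal (2 * (ρ ^ (1 - a) / (1 - a))) := by
        rw [hreflect, setLIntegral_Icc_zero_abs_rpow_neg ha hρ, ← two_mul,
          ENNReal.ofReal_mul zero_le_two, ENNReal.ofReal_ofNat]

lemma setLIntegral_Icc_abs_sub_rpow_neg_le {a r y : ℝ} (ha : a < 1) (hy : |y| ≤ r) :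
    ∫⁻ t in Set.Icc (-r) r, ENNReal.ofReal |y - t| ^ (-a) ≤
      ENNReal.ofReal (2 * ((2 * r) ^ (1 - a) / (1 - a))) := by
  refine le_trans ?_ (setLIntegral_Icc_abs_rpow_neg_le ha
    (mul_nonneg zero_le_two ((abs_nonneg y).trans hy)))
  calc ∫⁻ t in Set.Icc (-r) r, ENNReal.ofReal |y - t| ^ (-a)
      ≤ ∫⁻ t in (y - ·) ⁻¹' Set.Icc (-(2 * r)) (2 * r), ENNReal.ofReal |y - t| ^ (-a) := by
        refine lintegral_mono_set fun t ht => abs_le.1 ?_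
        linarith [abs_sub y t, abs_le.2 ht]
    _ = ∫⁻ s in Set.Icc (-(2 * r)) (2 * r), ENNReal.ofReal |s| ^ (-a) :=
        (Measure.measurePreserving_sub_left volume y).setLIntegral_comp_preimage
          (f := fun s => ENNReal.ofReal |s| ^ (-a)) measurableSet_Icc (by fun_prop)

lemma ennreal_rpow_neg_sum {x : ℝ≥0∞} (hx : x ≠ ⊤) {ι : Type*} (s : Finset ι) {a : ι → ℝ}
    (ha : ∀ k ∈ s, 0 ≤ a k) : x ^ (-∑ k ∈ s, a k) = ∏ k ∈ s, x ^ (-a k) := by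
  induction s using Finset.cons_induction with
  | empty => simp
  | cons k s hk ih =>
    rw [Finset.forall_mem_cons] at ha
    have hsum : 0 ≤ ∑ i ∈ s, a i := Finset.sum_nonneg ha.2
    rw [Finset.sum_cons, Finset.prod_cons, ← ih ha.2, ENNReal.rpow_neg, ENNReal.rpow_neg,
      ENNReal.rpow_neg, ENNReal.rpow_add_of_nonneg _ _ ha.1 hsum,
      ENNReal.mul_inv (.inr (ENNReal.rpow_ne_top_of_nonneg hsum hx))
        (.inl (ENNReal.rpow_ne_top_of_nonneg ha.1 hx))]

lemma setLIntegral_orthoBox_dist_rpow_neg_le [FiniteDimensional ℝ V]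
    (b : OrthonormalBasis (Fin n) ℝ V) {r a : Fin n → ℝ} (ha0 : ∀ k, 0 ≤ a k) (ha1 : ∀ k, a k < 1)
    {x : V} (hx : x ∈ orthoBox b r) :
    ∫⁻ y in orthoBox b r, ENNReal.ofReal (dist x y) ^ (-∑ k, a k) ≤
      ∏ k, ENNReal.ofReal (2 * ((2 * r k) ^ (1 - a k) / (1 - a k))) := by
  have hcoord (y : V) (k : Fin n) : |b.repr x k - b.repr y k| ≤ dist x y := by
    rw [← b.repr.dist_map, dist_eq_norm]
    exact PiLp.norm_apply_le (b.repr x - b.repr y) k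
  calc ∫⁻ y in orthoBox b r, ENNReal.ofReal (dist x y) ^ (-∑ k, a k)
      ≤ ∫⁻ y in orthoBox b r, ∏ k, ENNReal.ofReal |b.repr x k - b.repr y k| ^ (-a k) := by
        refine lintegral_mono fun y => ?_
        rw [ennreal_rpow_neg_sum ENNReal.ofReal_ne_top _ fun k _ => ha0 k]
        refine Finset.prod_le_prod' fun k _ => ?_
        rw [ENNReal.rpow_neg, ENNReal.rpow_neg, ENNReal.inv_le_inv]
        exact ENNReal.rpow_le_rpow (ENNReal.ofReal_le_ofReal (hcoord y k)) (ha0 k)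
    _ = ∏ k, ∫⁻ t in Set.Icc (-r k) (r k), ENNReal.ofReal |b.repr x k - t| ^ (-a k) :=
        setLIntegral_orthoBox_prod b r
          (f := fun k t => ENNReal.ofReal |b.repr x k - t| ^ (-a k)) fun k => by fun_prop
    _ ≤ ∏ k, ENNReal.ofReal (2 * ((2 * r k) ^ (1 - a k) / (1 - a k))) :=
        Finset.prod_le_prod' fun k _ => setLIntegral_Icc_abs_sub_rpow_neg_le (ha1 k) (hx k)

lemma energy_restrict_orthoBox_le {d : ℕ}
    (b : OrthonormalBasis (Fin d) ℝ (EuclideanSpace ℝ (Fin d))) {r a : Fin d → ℝ}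
    (ha0 : ∀ k, 0 ≤ a k) (ha1 : ∀ k, a k < 1) (hr : ∀ k, 0 ≤ r k) :
    energy (∑ k, a k) (volume.restrict (orthoBox b r)) ≤
      ENNReal.ofReal (∏ k, 2 * ((2 * r k) ^ (1 - a k) / (1 - a k)) * (2 * r k)) := by
  have hK (k : Fin d) : 0 ≤ 2 * ((2 * r k) ^ (1 - a k) / (1 - a k)) :=
    mul_nonneg zero_le_two (div_nonneg (Real.rpow_nonneg (mul_nonneg zero_le_two (hr k)) _)
      (sub_nonneg.2 (ha1 k).le))
  refine (setLIntegral_mono' (measurableSet_orthoBox b r) fun x hx =>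
    setLIntegral_orthoBox_dist_rpow_neg_le b ha0 ha1 hx).trans_eq ?_
  rw [setLIntegral_const, volume_orthoBox b hr, ← ENNReal.ofReal_prod_of_nonneg fun k _ => hK k,
    ← ENNReal.ofReal_mul (Finset.prod_nonneg fun k _ => hK k), ← Finset.prod_mul_distrib]

lemma energy_pos {d : ℕ} {α : ℝ} (hα : 0 ≤ α) {μ : Measure (EuclideanSpace ℝ (Fin d))} [SFinite μ]
    (hμ : μ ≠ 0) : 0 < energy α μ := by
  have hmeas : Measurable fun p : EuclideanSpace ℝ (Fin d) × EuclideanSpace ℝ (Fin d) =>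
    ENNReal.ofReal (dist p.1 p.2) ^ (-α) := by fun_prop
  have hpos (x y : EuclideanSpace ℝ (Fin d)) : ENNReal.ofReal (dist x y) ^ (-α) ≠ 0 := by
    rw [ENNReal.rpow_neg, ENNReal.inv_ne_zero]
    exact ENNReal.rpow_ne_top_of_nonneg hα ENNReal.ofReal_ne_top
  have huniv : 0 < μ Set.univ := Measure.measure_univ_pos.2 hμ
  rw [energy, lintegral_pos_iff_support hmeas.lintegral_prod_right',
    Function.support_eq_univ fun x => ?_]
  · exact huniv
  · rw [← pos_iff_ne_zero, lintegral_pos_iff_support (by fun_prop),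
      Function.support_eq_univ (hpos x)]
    exact huniv

end OrthoBox

section LowerBound

open scoped RealInnerProductSpace

lemma half_measureReal_univ_le_norm_charFun {V : Type*} [NormedAddCommGroup V]
    [InnerProductSpace ℝ V] [MeasurableSpace V] [OpensMeasurableSpace V]
    {μ : Measure V} [IsFiniteMeasure μ] {ζ : V} (h : ∀ᵐ x ∂μ, |⟪x, ζ⟫| ≤ 1) :
    μ.real Set.univ / 2 ≤ ‖charFun μ ζ‖ := by
  have hexp : Integrable (fun x => Complex.exp (⟪x, ζ⟫ * Complex.I)) μ :=
    .of_bound (Continuous.aestronglyMeasurable (by fun_prop)) 1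
      (.of_forall fun x => (Complex.norm_exp_ofReal_mul_I _).le)
  have hre : (charFun μ ζ).re = ∫ x, Real.cos ⟪x, ζ⟫ ∂μ := by
    rw [charFun_apply, ← RCLike.re_eq_complex_re, ← integral_re hexp]
    exact integral_congr_ae (.of_forall fun x => Complex.exp_ofReal_mul_I_re _)
  have hcos : Integrable (fun x => Real.cos ⟪x, ζ⟫) μ :=
    .of_bound (Continuous.aestronglyMeasurable (by fun_prop)) 1
      (.of_forall fun x => Real.abs_cos_le_one _)
  calc μ.real Set.univ / 2 = ∫ _, (1 / 2 : ℝ) ∂μ := by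
        rw [integral_const, smul_eq_mul, mul_one_div]
    _ ≤ ∫ x, Real.cos ⟪x, ζ⟫ ∂μ := by
        refine integral_mono_ae (integrable_const _) hcos ?_
        filter_upwards [h] with x hx
        linarith [Real.one_sub_sq_div_two_le_cos (x := ⟪x, ζ⟫), (sq_le_one_iff_abs_le_one _).2 hx]
    _ ≤ ‖charFun μ ζ‖ := hre ▸ Complex.re_le_norm _

lemma sq_mul_volumeReal_le_hypAvg {d m : ℕ} {μ : Measure (EuclideanSpace ℝ (Fin d))}
    [IsFiniteMeasure μ] {R κ : ℝ} (hκ : 0 ≤ κ) {S : Set (EuclideanSpace ℝ (Fin (d - 1)))}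
    (hSmeas : MeasurableSet S) (hS : S ⊆ ball 0 1)
    (h : ∀ ξ ∈ S, κ ≤ ‖charFun μ (R • hypLift d m ξ)‖) :
    κ ^ 2 * volume.real S ≤ hypAvg d m μ R := by
  have hint := integrableOn_norm_ftM_sq_mul (m := m) μ R
  refine le_trans ?_ (setIntegral_mono_set hint (.of_forall fun ξ => by positivity)
    hS.eventuallyLE)
  refine setIntegral_ge_of_const_le_real hSmeas (measure_ne_top_of_subset hS measure_ball_lt_top.ne)
    (fun ξ hξ => ?_) (hint.mono_set hS)
  have hsqrt : 1 ≤ √(1 + 4 * ‖ξ‖ ^ 2) :=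
    Real.one_le_sqrt.2 (le_add_of_nonneg_right (by positivity))
  rw [norm_ftM]
  exact (pow_le_pow_left₀ hκ (h ξ hξ) 2).trans (le_mul_of_one_le_right (by positivity) hsqrt)

variable {n m : ℕ}

/-- The unit vector `(eᵢ + e_{n-1-i}) / √2`; for `i < m ≤ n / 2` it is isotropic for the
quadratic form, whose signs at `i` and `n - 1 - i` are opposite. -/
def isotropicVector (i : Fin n) : EuclideanSpace ℝ (Fin n) :=
  (√2)⁻¹ • (EuclideanSpace.single i 1 + EuclideanSpace.single i.rev 1)

lemma isotropicVector_apply (i k : Fin n) :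
    isotropicVector i k = (√2)⁻¹ * ((if k = i then 1 else 0) + if k = i.rev then 1 else 0) := by
  simp [isotropicVector, mul_add]

lemma isotropicVector_rev (i k : Fin n) : isotropicVector i k.rev = isotropicVector i k := by
  simp only [isotropicVector_apply, Fin.rev_eq_iff, Fin.rev_rev]
  rw [add_comm]

lemma inner_isotropicVector_right (x : EuclideanSpace ℝ (Fin n)) (j : Fin n) :
    ⟪x, isotropicVector j⟫ = (√2)⁻¹ * (x j + x j.rev) := by
  simp [isotropicVector, inner_smul_right, inner_add_right, EuclideanSpace.inner_single_right,
    mul_add]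

lemma inner_isotropicVector {i j : Fin n} (h : j ≠ i.rev) :
    ⟪isotropicVector i, isotropicVector j⟫ = if i = j then 1 else 0 := by
  have h2 : (√2)⁻¹ * ((√2)⁻¹ + (√2)⁻¹) = 1 := by
    rw [← two_mul, mul_left_comm, ← mul_inv, Real.mul_self_sqrt zero_le_two,
      mul_inv_cancel₀ two_ne_zero]
  rw [inner_isotropicVector_right, isotropicVector_rev, isotropicVector_apply, if_neg h, add_zero,
    mul_ite, mul_one, mul_zero]
  by_cases hij : i = j
  · rw [if_pos hij, if_pos hij.symm, h2]
  · rw [if_neg hij, if_neg (Ne.symm hij), add_zero, mul_zero]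

lemma inner_hypM_isotropicVector (hm : 2 * m ≤ n) (i : Fin n) {j : Fin n} (hj : (j : ℕ) < m) :
    ⟪hypM (n + 1) m (isotropicVector i), isotropicVector j⟫ = 0 := by
  have hpos : (j : ℕ) < n + 1 - 1 - m := by omega
  have hneg : ¬(j.rev : ℕ) < n + 1 - 1 - m := by
    rw [Fin.val_rev]
    omega
  refine (inner_isotropicVector_right _ j).trans ?_
  rw [hypM_apply, hypM_apply, if_pos hpos, if_neg hneg, isotropicVector_rev]
  ring

/-- The first `m` vectors of `b` span a totally isotropic subspace of the quadratic form. -/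
def HasIsotropicInitSpan (m : ℕ) (b : OrthonormalBasis (Fin n) ℝ (EuclideanSpace ℝ (Fin n))) :
    Prop :=
  ∀ ξ, (∀ i : Fin n, m ≤ i → b.repr ξ i = 0) → hypQ (n + 1) m ξ = 0

lemma exists_hasIsotropicInitSpan (hm : 2 * m ≤ n) :
    ∃ b : OrthonormalBasis (Fin n) ℝ (EuclideanSpace ℝ (Fin n)), HasIsotropicInitSpan m b := by
  have hrev {i j : Fin n} (hi : (i : ℕ) < m) (hj : (j : ℕ) < m) : j ≠ i.rev := fun h => by
    rw [h, Fin.val_rev] at hj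
    omega
  have hv : Orthonormal ℝ ({i : Fin n | (i : ℕ) < m}.domRestrict isotropicVector) :=
    orthonormal_iff_ite.2 fun i j => by
      simpa only [Subtype.ext_iff] using! inner_isotropicVector (hrev i.2 j.2)
  obtain ⟨b, hb⟩ := hv.exists_orthonormalBasis_extension_of_card_eq (by simp)
  refine ⟨b, fun ξ hξ => ?_⟩
  rw [hypQ_eq_inner, ← b.sum_repr ξ, map_sum, sum_inner]
  refine Finset.sum_eq_zero fun i _ => ?_
  rw [inner_sum]
  refine Finset.sum_eq_zero fun j _ => ?_
  rw [map_smul, inner_smul_left, inner_smul_right]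
  rcases lt_or_ge (i : ℕ) m with hi | hi
  · rcases lt_or_ge (j : ℕ) m with hj | hj
    · rw [hb i hi, hb j hj, inner_hypM_isotropicVector hm i hj, mul_zero, mul_zero]
    · rw [hξ j hj, zero_mul, mul_zero]
  · rw [hξ i hi, map_zero, zero_mul]

/-- The orthonormal basis of `ℝⁿ⁺¹` consisting of a given basis of `ℝⁿ` and the last unit vector. -/
def snocBasis (b : OrthonormalBasis (Fin n) ℝ (EuclideanSpace ℝ (Fin n))) :
    OrthonormalBasis (Fin (n + 1)) ℝ (EuclideanSpace ℝ (Fin (n + 1))) :=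
  .ofRepr (LinearIsometry.toLinearIsometryEquiv
    { toFun := fun x => WithLp.toLp 2 (Fin.snoc (α := fun _ => ℝ) (b.repr (initProj n x))
        (x (Fin.last n)))
      map_add' := fun x y => by
        ext i
        refine Fin.lastCases ?_ (fun i => ?_) i <;> simp
      map_smul' := fun c x => by
        ext i
        refine Fin.lastCases ?_ (fun i => ?_) i <;> simp
      norm_map' := fun x => by
        rw [← sq_eq_sq₀ (norm_nonneg _) (norm_nonneg _), norm_sq_eq_norm_initProj_sq_add x,
          ← b.repr.norm_map (initProj n x), EuclideanSpace.real_norm_sq_eq,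
          EuclideanSpace.real_norm_sq_eq, Fin.sum_univ_castSucc]
        simp } rfl)

@[simp]
lemma snocBasis_repr_castSucc (b : OrthonormalBasis (Fin n) ℝ (EuclideanSpace ℝ (Fin n)))
    (x : EuclideanSpace ℝ (Fin (n + 1))) (i : Fin n) :
    (snocBasis b).repr x i.castSucc = b.repr (initProj n x) i := by
  simp [snocBasis]

@[simp]
lemma snocBasis_repr_last (b : OrthonormalBasis (Fin n) ℝ (EuclideanSpace ℝ (Fin n)))
    (x : EuclideanSpace ℝ (Fin (n + 1))) :
    (snocBasis b).repr x (Fin.last n) = x (Fin.last n) := by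
  simp [snocBasis]

end LowerBound

section Counterexample

open scoped RealInnerProductSpace

lemma norm_le_sum_of_mem_orthoBox {n : ℕ} {V : Type*} [NormedAddCommGroup V]
    [InnerProductSpace ℝ V] {b : OrthonormalBasis (Fin n) ℝ V} {r : Fin n → ℝ} {x : V}
    (hx : x ∈ orthoBox b r) : ‖x‖ ≤ ∑ k, r k := by
  calc ‖x‖ = ‖∑ k, b.repr x k • b k‖ := by rw [b.sum_repr]
    _ ≤ ∑ k, ‖b.repr x k • b k‖ := norm_sum_le _ _
    _ ≤ ∑ k, r k := Finset.sum_le_sum fun k _ => by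
        rw [norm_smul, b.norm_eq_one, mul_one]
        exact hx k

lemma abs_inner_le_of_mem_orthoBox {n : ℕ} {V : Type*} [NormedAddCommGroup V]
    [InnerProductSpace ℝ V] {b : OrthonormalBasis (Fin n) ℝ V} {r s : Fin n → ℝ} {x y : V}
    (hx : x ∈ orthoBox b r) (hy : y ∈ orthoBox b s) : |⟪x, y⟫| ≤ ∑ k, r k * s k := by
  calc |⟪x, y⟫| = |∑ k, b.repr x k * b.repr y k| := by
        rw [← b.repr.inner_map_map]
        simp only [PiLp.inner_apply, RCLike.inner_apply, conj_trivial, mul_comm]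
    _ ≤ ∑ k, |b.repr x k * b.repr y k| := Finset.abs_sum_le_sum_abs _ _
    _ ≤ ∑ k, r k * s k := Finset.sum_le_sum fun k _ => by
        rw [abs_mul]
        exact mul_le_mul (hx k) (hy k) (abs_nonneg _) ((abs_nonneg _).trans (hx k))

/-- The family equal to `s` on the first `m` indices and to `t` on the others. The boxes below have
widths of two sizes, distributed according to whether the direction is isotropic. -/
def twoScale {k : ℕ} (m : ℕ) (s t : ℝ) (i : Fin k) : ℝ := if (i : ℕ) < m then s else t

variable {k n m : ℕ}

instance isFiniteMeasure_restrict_orthoBox {V : Type*} [NormedAddCommGroup V]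
    [InnerProductSpace ℝ V] [FiniteDimensional ℝ V] [MeasurableSpace V] [BorelSpace V]
    (b : OrthonormalBasis (Fin n) ℝ V) (r : Fin n → ℝ) :
    IsFiniteMeasure (volume.restrict (orthoBox b r)) :=
  isFiniteMeasure_restrict.2 <| measure_ne_top_of_subset
    (fun _ hx => mem_closedBall_zero_iff.2 (norm_le_sum_of_mem_orthoBox hx))
    measure_closedBall_lt_top.ne

lemma forall_twoScale {P : ℝ → Prop} {s t : ℝ} (hs : P s) (ht : P t) (i : Fin k) :
    P (twoScale m s t i) := by
  unfold twoScale
  split_ifs <;> assumption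

lemma sum_twoScale (h : m ≤ k) (s t : ℝ) :
    ∑ i : Fin k, twoScale m s t i = m * s + (k - m) * t := by
  simp only [twoScale, Finset.sum_ite, Finset.sum_const, nsmul_eq_mul, Finset.filter_not,
    Finset.card_sdiff_of_subset (Finset.filter_subset _ _), Finset.card_univ, Fintype.card_fin,
    Fin.card_filter_val_lt, min_eq_right h, Nat.cast_sub h]

lemma prod_twoScale (h : m ≤ k) (s t : ℝ) :
    ∏ i : Fin k, twoScale m s t i = s ^ m * t ^ (k - m) := by
  simp only [twoScale, Finset.prod_ite, Finset.prod_const, Finset.filter_not,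
    Finset.card_sdiff_of_subset (Finset.filter_subset _ _), Finset.card_univ, Fintype.card_fin,
    Fin.card_filter_val_lt, min_eq_right h]

lemma volume_orthoBox_twoScale {V : Type*} [NormedAddCommGroup V] [InnerProductSpace ℝ V]
    [FiniteDimensional ℝ V] [MeasurableSpace V] [BorelSpace V] (b : OrthonormalBasis (Fin k) ℝ V)
    (h : m ≤ k) {s t : ℝ} (hs : 0 ≤ s) (ht : 0 ≤ t) :
    volume.real (orthoBox b (twoScale m s t)) = (2 * s) ^ m * (2 * t) ^ (k - m) := by
  have hscale (i : Fin k) : 2 * twoScale m s t i = twoScale m (2 * s) (2 * t) i := apply_ite _ _ _ _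
  rw [Measure.real, volume_orthoBox b fun i => forall_twoScale hs ht i,
    Finset.prod_congr rfl fun i _ => hscale i, prod_twoScale h,
    ENNReal.toReal_ofReal (by positivity)]

lemma orthoBox_twoScale_subset_closedBall {V : Type*} [NormedAddCommGroup V] [InnerProductSpace ℝ V]
    (b : OrthonormalBasis (Fin k) ℝ V) {s t c : ℝ} (hs : s ≤ c) (ht : t ≤ c) :
    orthoBox b (twoScale m s t) ⊆ closedBall 0 (k * c) := fun x hx => by
  rw [mem_closedBall_zero_iff]
  refine (norm_le_sum_of_mem_orthoBox hx).trans ?_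
  calc ∑ i, twoScale m s t i ≤ ∑ _ : Fin k, c :=
        Finset.sum_le_sum fun i _ => forall_twoScale (P := (· ≤ c)) hs ht i
    _ = k * c := by simp

lemma exists_energy_restrict_orthoBox_twoScale_le
    (b : OrthonormalBasis (Fin k) ℝ (EuclideanSpace ℝ (Fin k))) (h : m ≤ k) {c p q : ℝ}
    (hc : 0 ≤ c) (hp : p ∈ Set.Ico 0 1) (hq : q ∈ Set.Ico 0 1) :
    ∃ E : ℝ, ∀ R : ℝ, 0 < R →
      energy (m * p + (k - m) * q) (volume.restrict (orthoBox b (twoScale m (c / R) c))) ≤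
        ENNReal.ofReal (E * R ^ (-(m * (2 - p)))) := by
  set g : ℝ → ℝ → ℝ := fun a r => 2 * ((2 * r) ^ (1 - a) / (1 - a)) * (2 * r) with hg
  refine ⟨g p c ^ m * g q c ^ (k - m), fun R hR => ?_⟩
  have hgR : g p (c / R) = g p c * R ^ (-(2 - p)) := by
    have hexp : R ^ (-(2 - p)) = (R ^ (1 - p))⁻¹ * R⁻¹ := by
      rw [← Real.rpow_neg hR.le, ← Real.rpow_neg_one, ← Real.rpow_add hR]
      ring_nf
    simp only [hg, hexp, mul_div_assoc', Real.div_rpow (mul_nonneg zero_le_two hc) hR.le]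
    field_simp
  have hprod (i : Fin k) : g (twoScale m p q i) (twoScale m (c / R) c i) =
      twoScale m (g p (c / R)) (g q c) i := (apply_ite₂ g _ _ _ _ _)
  have henergy := energy_restrict_orthoBox_le b
    (fun i => forall_twoScale (P := (0 ≤ ·)) (m := m) hp.1 hq.1 i)
    (fun i => forall_twoScale (P := (· < 1)) (m := m) hp.2 hq.2 i)
    (fun i => forall_twoScale (P := (0 ≤ ·)) (m := m) (div_nonneg hc hR.le) hc i)
  rw [sum_twoScale h, Finset.prod_congr rfl fun i _ => hprod i, prod_twoScale h, hgR] at henergy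
  refine henergy.trans_eq (congrArg _ ?_)
  rw [mul_pow, ← Real.rpow_mul_natCast hR.le]
  ring_nf

lemma abs_hypQ_le_of_mem_orthoBox {b : OrthonormalBasis (Fin n) ℝ (EuclideanSpace ℝ (Fin n))}
    (hb : HasIsotropicInitSpan m b) {s t : ℝ}
    (ht : 0 ≤ t) (hts : t ≤ s) {ξ : EuclideanSpace ℝ (Fin n)}
    (hξ : ξ ∈ orthoBox b (twoScale m s t)) :
    |hypQ (n + 1) m ξ| ≤ n * t * (2 * (n * s)) := by
  set η := b.repr.symm (WithLp.toLp 2 fun i => if (i : ℕ) < m then b.repr ξ i else 0) with hη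
  have hη_repr (i : Fin n) : b.repr η i = if (i : ℕ) < m then b.repr ξ i else 0 := by
    rw [hη, LinearIsometryEquiv.apply_symm_apply]
  have hQ : hypQ (n + 1) m η = 0 := hb η fun i hi => by rw [hη_repr, if_neg hi.not_gt]
  have hsub : ξ - η ∈ orthoBox b fun _ => t := fun i => by
    have hi := hξ i
    rw [map_sub, PiLp.sub_apply, hη_repr]
    unfold twoScale at hi
    split_ifs at hi ⊢
    · rwa [sub_self, abs_zero]
    · rwa [sub_zero]
  have hadd : ξ + η ∈ orthoBox b fun _ => 2 * s := fun i => by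
    have hi := hξ i
    rw [map_add, PiLp.add_apply, hη_repr]
    unfold twoScale at hi
    split_ifs at hi ⊢
    · rw [← two_mul, abs_mul, abs_two]
      linarith
    · rw [add_zero]
      linarith
  have hsub_norm := norm_le_sum_of_mem_orthoBox hsub
  have hadd_norm := norm_le_sum_of_mem_orthoBox hadd
  simp only [Finset.sum_const, Finset.card_univ, Fintype.card_fin, nsmul_eq_mul]
    at hsub_norm hadd_norm
  calc |hypQ (n + 1) m ξ| = |hypQ (n + 1) m ξ - hypQ (n + 1) m η| := by rw [hQ, sub_zero]
    _ ≤ ‖ξ - η‖ * ‖ξ + η‖ := abs_hypQ_sub_le _ _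
    _ ≤ n * t * (n * (2 * s)) := by gcongr
    _ = n * t * (2 * (n * s)) := by ring

lemma abs_inner_smul_hypLift_le_one {b : OrthonormalBasis (Fin n) ℝ (EuclideanSpace ℝ (Fin n))}
    (hm : m ≤ n) (hb : HasIsotropicInitSpan m b)
    {c R : ℝ} (hc : 0 ≤ c) (hcn : 2 * ((n + 1) * c) ≤ 1) (hR : 1 ≤ R)
    {x : EuclideanSpace ℝ (Fin (n + 1))} {ξ : EuclideanSpace ℝ (Fin n)}
    (hx : x ∈ orthoBox (snocBasis b) (twoScale m (c / R) c))
    (hξ : ξ ∈ orthoBox b (twoScale m c (c / R))) :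
    |⟪x, R • hypLift (n + 1) m ξ⟫| ≤ 1 := by
  have hR0 : 0 < R := one_pos.trans_le hR
  have hxlast : |x (Fin.last n)| ≤ c := by
    simpa [snocBasis_repr_last, twoScale, hm.not_gt] using hx (Fin.last n)
  have hxinit : initProj n x ∈ orthoBox b (twoScale m (c / R) c) := fun i => by
    simpa only [snocBasis_repr_castSucc, twoScale, Fin.val_castSucc] using hx i.castSucc
  have hscale (i : Fin n) : twoScale m (c / R) c i * twoScale m c (c / R) i = c ^ 2 / R := by
    unfold twoScale
    split_ifs <;> ring
  have hinner : |⟪initProj n x, ξ⟫| ≤ n * (c ^ 2 / R) := by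
    simpa [hscale] using abs_inner_le_of_mem_orthoBox hxinit hξ
  have hQ := abs_hypQ_le_of_mem_orthoBox hb (by positivity) (div_le_self hc hR) hξ
  have hnc : n * c ≤ 1 / 2 := by linarith
  have hc1 : c ≤ 1 / 2 := by nlinarith
  rw [inner_smul_right, inner_eq_inner_initProj_add, initProj_hypLift, hypLift_last, abs_mul,
    abs_of_pos hR0]
  calc R * |⟪initProj n x, ξ⟫ + x (Fin.last n) * hypQ (n + 1) m ξ|
      ≤ R * (n * (c ^ 2 / R) + c * (n * (c / R) * (2 * (n * c)))) := by
        gcongr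
        refine (abs_add_le _ _).trans (add_le_add hinner ?_)
        rw [abs_mul]
        gcongr
    _ = n * c * c + 2 * c * (n * c) * (n * c) := by
        field_simp
    _ ≤ 1 / 2 * (1 / 2) + 2 * (1 / 2) * (1 / 2) * (1 / 2) := by gcongr
    _ ≤ 1 := by norm_num

lemma sq_mul_volume_twoScale_eq (hm : m ≤ n) {c R : ℝ} (hR : 0 < R) :
    ((2 * (c / R)) ^ m * (2 * c) ^ (n + 1 - m) / 2) ^ 2 *
        ((2 * c) ^ m * (2 * (c / R)) ^ (n - m)) =
      ((2 * c) ^ (n + 1) / 2) ^ 2 * (2 * c) ^ n * R ^ (-(n + m : ℝ)) := by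
  obtain ⟨l, rfl⟩ := Nat.exists_eq_add_of_le hm
  have hpow : R ^ (-((m + l : ℕ) + m : ℝ)) = (R ^ m * R ^ m * R ^ l)⁻¹ := by
    rw [← pow_add, ← pow_add, Real.rpow_neg hR.le, ← Nat.cast_add, Real.rpow_natCast]
    congr 2
    omega
  rw [hpow, add_assoc, Nat.add_sub_cancel_left, Nat.add_sub_cancel_left, ← mul_div_assoc,
    div_pow _ R m, div_pow _ R l]
  field_simp
  ring

lemma exists_le_hypAvg_restrict_orthoBox
    {b : OrthonormalBasis (Fin n) ℝ (EuclideanSpace ℝ (Fin n))} (hm : m ≤ n)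
    (hb : HasIsotropicInitSpan m b) {c : ℝ} (hc : 0 < c) (hcn : 2 * ((n + 1) * c) ≤ 1) :
    ∃ L : ℝ, 0 < L ∧ ∀ R : ℝ, 1 ≤ R → L * R ^ (-(n + m : ℝ)) ≤
      hypAvg (n + 1) m (volume.restrict (orthoBox (snocBasis b) (twoScale m (c / R) c))) R := by
  refine ⟨((2 * c) ^ (n + 1) / 2) ^ 2 * (2 * c) ^ n, by positivity, fun R hR => ?_⟩
  have hR0 : 0 < R := one_pos.trans_le hR
  set μ := volume.restrict (orthoBox (snocBasis b) (twoScale m (c / R) c)) with hμ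
  have hmass : μ.real Set.univ = (2 * (c / R)) ^ m * (2 * c) ^ (n + 1 - m) := by
    rw [hμ, measureReal_restrict_apply_univ,
      volume_orthoBox_twoScale _ (hm.trans n.le_succ) (by positivity) hc.le]
  have havg := sq_mul_volumeReal_le_hypAvg (m := m) (μ := μ) (R := R) (κ := μ.real Set.univ / 2)
    (by positivity) (measurableSet_orthoBox b (twoScale m c (c / R))) ?_ fun ξ hξ => ?_
  · rw [hmass, volume_orthoBox_twoScale b hm hc.le (by positivity)] at havg
    rwa [sq_mul_volume_twoScale_eq hm hR0] at havg
  · refine (orthoBox_twoScale_subset_closedBall b le_rfl (div_le_self hc.le hR)).trans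
      (closedBall_subset_ball ?_)
    linarith
  · refine half_measureReal_univ_le_norm_charFun ?_
    filter_upwards [ae_restrict_mem (measurableSet_orthoBox _ _)] with x hx
    exact abs_inner_smul_hypLift_le_one hm hb hc.le hcn hR hx hξ

lemma decayFails_of_rpow_bounds {d m : ℕ} {α β e f E L : ℝ} (hL : 0 < L) (hβ : f < β + e)
    (μ : ℝ → Measure (EuclideanSpace ℝ (Fin d))) [∀ R, IsFiniteMeasure (μ R)]
    (hsupp : ∀ R, 1 < R → μ R (closedBall 0 1)ᶜ = 0) (hpos : ∀ R, 1 < R → 0 < energy α (μ R))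
    (henergy : ∀ R, 1 < R → energy α (μ R) ≤ ENNReal.ofReal (E * R ^ (-e)))
    (havg : ∀ R, 1 < R → L * R ^ (-f) ≤ hypAvg d m (μ R) R) : decayFails d m α β := by
  intro C hC
  have hlim : Filter.Tendsto (fun R : ℝ => C * E * R ^ (-(β + e - f))) Filter.atTop (nhds 0) := by
    simpa using (tendsto_rpow_neg_atTop (sub_pos.2 hβ)).const_mul (C * E)
  obtain ⟨R, hRL, hR⟩ :=
    ((hlim.eventually (gt_mem_nhds hL)).and (Filter.eventually_gt_atTop 1)).exists
  have hR0 : 0 < R := one_pos.trans hR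
  have hE : 0 < E * R ^ (-e) := ENNReal.ofReal_pos.1 ((hpos R hR).trans_le (henergy R hR))
  refine ⟨μ R, inferInstance, hsupp R hR, hpos R hR,
    ne_top_of_le_ne_top ENNReal.ofReal_ne_top (henergy R hR), R, hR, ?_⟩
  calc C * R ^ (-β) * (energy α (μ R)).toReal
      ≤ C * R ^ (-β) * (E * R ^ (-e)) := by
        gcongr
        exact ENNReal.toReal_le_of_le_ofReal hE.le (henergy R hR)
    _ = C * E * R ^ (-(β + e - f)) * R ^ (-f) := by
        rw [mul_mul_mul_comm, mul_assoc _ (R ^ _), ← Real.rpow_add hR0, ← Real.rpow_add hR0]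
        ring_nf
    _ < L * R ^ (-f) := by gcongr
    _ ≤ hypAvg d m (μ R) R := havg R hR

lemma exists_exponents {α β : ℝ} (hm : 2 * m ≤ n) (hα0 : 0 < α) (hα : α < n + 1)
    (hβ : max (α - 1) (n - m) < β) :
    ∃ p ∈ Set.Ico (0 : ℝ) 1, ∃ q ∈ Set.Ico (0 : ℝ) 1,
      m * p + ((n + 1 : ℕ) - m) * q = α ∧ n + m < β + m * (2 - p) := by
  obtain ⟨hαβ, hnβ⟩ := max_lt_iff.1 hβ
  have hmn : (m : ℝ) ≤ n := by exact_mod_cast (by omega : m ≤ n)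
  push_cast
  rcases m.eq_zero_or_pos with rfl | hm0
  · refine ⟨0, by simp, α / (n + 1), ⟨by positivity, (div_lt_one (by positivity)).2 hα⟩, ?_, ?_⟩
    · simp [mul_div_cancel₀, show (n : ℝ) + 1 ≠ 0 by positivity]
    · simpa using hnβ
  · have hm0' : (0 : ℝ) < m := Nat.cast_pos.2 hm0
    have hcodim : (0 : ℝ) < n + 1 - m := by linarith
    obtain ⟨s, hs, hs'⟩ : ∃ s : ℝ, max 0 (α - (n + 1 - m)) < s ∧
        s < min (m : ℝ) (min α (β - (n - m))) := by
      refine exists_between (max_lt (lt_min hm0' (lt_min hα0 (by linarith)))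
        (lt_min ?_ (lt_min ?_ ?_))) <;> linarith
    obtain ⟨hs0, hsα⟩ := max_lt_iff.1 hs
    obtain ⟨hsm, hsα', hsβ⟩ := And.imp_right lt_min_iff.1 (lt_min_iff.1 hs')
    refine ⟨s / m, ⟨by positivity, (div_lt_one hm0').2 hsm⟩, (α - s) / (n + 1 - m),
      ⟨div_nonneg (by linarith) hcodim.le, (div_lt_one hcodim).2 (by linarith)⟩, ?_, ?_⟩
    · rw [mul_div_cancel₀ _ hm0'.ne', mul_div_cancel₀ _ hcodim.ne', add_sub_cancel]
    · rw [mul_sub, mul_div_cancel₀ _ hm0'.ne']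
      linarith

lemma decayFails_of_lt {α β : ℝ} (hm : 2 * m ≤ n) (hα0 : 0 < α) (hα : α < n + 1)
    (hβ : max (α - 1) (n - m) < β) : decayFails (n + 1) m α β := by
  obtain ⟨p, hp, q, hq, hpq, hexp⟩ := exists_exponents hm hα0 hα hβ
  obtain ⟨b, hb⟩ := exists_hasIsotropicInitSpan hm
  have hmn : m ≤ n := by omega
  obtain ⟨c, hc, hcn⟩ : ∃ c : ℝ, 0 < c ∧ 2 * ((n + 1) * c) ≤ 1 :=
    ⟨(2 * (n + 1))⁻¹, by positivity, by rw [← mul_assoc, mul_inv_cancel₀ (by positivity)]⟩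
  obtain ⟨E, hE⟩ := exists_energy_restrict_orthoBox_twoScale_le (snocBasis b) (hmn.trans n.le_succ)
    hc.le hp hq
  obtain ⟨L, hL, hLR⟩ := exists_le_hypAvg_restrict_orthoBox hmn hb hc hcn
  rw [hpq] at hE
  refine decayFails_of_rpow_bounds hL hexp (fun R => volume.restrict
    (orthoBox (snocBasis b) (twoScale m (c / R) c))) (fun R hR => ?_) (fun R hR => ?_)
    (fun R hR => hE R (one_pos.trans hR)) (fun R hR => hLR R hR.le)
  · have hsub : orthoBox (snocBasis b) (twoScale m (c / R) c) ⊆ closedBall 0 1 :=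
      (orthoBox_twoScale_subset_closedBall _ (div_le_self hc.le hR.le) le_rfl).trans
        (closedBall_subset_closedBall (by push_cast; linarith))
    rw [Measure.restrict_apply isClosed_closedBall.measurableSet.compl,
      (Set.disjoint_compl_left_iff_subset.2 hsub).inter_eq, measure_empty]
  · have hR0 : 0 < R := one_pos.trans hR
    refine energy_pos hα0.le fun h0 => ?_
    have hvol := volume_orthoBox_twoScale (snocBasis b) (hmn.trans n.le_succ)
      (div_nonneg hc.le hR0.le) hc.le
    rw [Measure.real, Measure.restrict_eq_zero.1 h0, ENNReal.toReal_zero] at hvol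
    exact (by positivity : (0 : ℝ) < _).ne hvol

end Counterexample

theorem statement7_general (d m : ℕ) (hm : 2 * m < d) (α : ℝ) (hα0 : 0 < α) (hαd : α < d) :
    (∀ β ≤ α - 1, decayBound d m α β) ∧
    (∀ β : ℝ, max (α - 1) (d - 1 - m) < β → decayFails d m α β) := by
  obtain ⟨n, rfl⟩ : ∃ n, d = n + 1 := Nat.exists_eq_succ_of_ne_zero (by omega)
  push_cast at hαd ⊢
  exact ⟨fun β => decayBound_of_le hα0, fun β hβ =>
    decayFails_of_lt (by omega) hα0 hαd (by rwa [add_sub_cancel_right] at hβ)⟩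

/-- if `d - m <= a < d` then `beta(a, H_m^{d-1}) = a - 1`: the decay estimate
holds for every `0 < b < a - 1` and fails for every `b > a - 1`. -/
theorem statement7 (d m : ℕ) (hd : 3 ≤ d) (hm1 : 1 ≤ m) (hm2 : 2 * m ≤ d - 1)
    (α : ℝ) (hα1 : (d : ℝ) - m ≤ α) (hα2 : α < d) :
    (∀ β : ℝ, 0 < β → β < α - 1 → decayBound d m α β) ∧
    (∀ β : ℝ, α - 1 < β → decayFails d m α β) := by
  have h := statement7_general d m (by omega) α
    (by linarith [show (m : ℝ) < d by exact_mod_cast (by omega : m < d)]) hα2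
  exact ⟨fun β _ hβ => h.1 β hβ.le, fun β hβ => h.2 β (max_lt hβ (by linarith))⟩
end
end

section
/- Let n ≥ 2 be an integer and let M be an n×n real diagonal matrix all of whose diagonal entries are +1 or −1; let p_M be the number of +1 entries, n_M the number of −1 entries, and m = min(p_M, n_M). Let 0 < ε < 1, let w₁, …, w_l be an orthonormal family of vectors in ℝ^n, and let λ₁, …, λ_l be real numbers such that ⟨M w_i, w_j⟩ = λ_i δ_{ij} for all 1 ≤ i, j ≤ l. Then min( #{i : λ_i ≥ 1−ε}, #{i : λ_i ≤ −(1−ε)} ) + #{i : |λ_i| < 1−ε} ≤ m. -/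
open Finset

/-!
A linear map embeds every positive definite subspace for a pulled-back quadratic form as a positive
definite subspace for the original form, so pulling back cannot increase the positive index of
inertia. Let `W` be the matrix whose rows are the orthonormal family. For every `t`, pulling
`M - t • 1` back along `c ↦ c ᵥ* W` gives the diagonal form with weights `λᵢ - t`; hence at most as
many `λᵢ` as diagonal entries of `M` exceed `t`. For `M` and `t = -(1 - e)`, and for `-M` and the
same `t`, these are the two bounds whose minimum is claimed.
-/

open Matrix QuadraticMap

theorem sigPos_comp_le {R M N : Type*} [CommRing R] [LinearOrder R] [StrongRankCondition R]
    [AddCommGroup M] [Module R M] [Module.Finite R M]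
    [AddCommGroup N] [Module R N] [Module.Finite R N]
    (Q : QuadraticForm R N) (f : M →ₗ[R] N) : sigPos (Q.comp f) ≤ sigPos Q := by
  obtain ⟨V, hVrank, hVpos⟩ := exists_finrank_eq_sigPos_and_posDef (Q.comp f)
  have hpos (x : V) (hx : x ≠ 0) : 0 < Q (f x) := hVpos x hx
  have hinj : Function.Injective (f.domRestrict V) := by
    rw [← LinearMap.ker_eq_bot, LinearMap.ker_eq_bot']
    intro x hfx
    by_contra hx
    simpa [show f x = 0 from hfx] using hpos x hx
  have hrange : (Q.restrict (f.domRestrict V).range).PosDef := by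
    rintro ⟨_, x, rfl⟩ hy
    exact hpos x fun hx ↦ hy (by simp [hx])
  calc sigPos (Q.comp f) = Module.finrank R (f.domRestrict V).range := by
        rw [LinearMap.finrank_range_of_inj hinj, hVrank]
    _ ≤ sigPos Q := le_sigPos_of_posDef Q hrange

section Congruence

variable {ι κ : Type*} [Fintype ι] [DecidableEq ι] [Fintype κ]

theorem weightedSumSquares_eq_dotProduct_diagonal_mulVec {R : Type*} [CommSemiring R]
    (a x : ι → R) : weightedSumSquares R a x = x ⬝ᵥ diagonal a *ᵥ x := by
  simp only [weightedSumSquares_apply, dotProduct, mulVec_diagonal, smul_eq_mul, mul_left_comm]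

theorem weightedSumSquares_comp_vecMulLinear [DecidableEq κ] {R : Type*} [CommSemiring R]
    {W : Matrix ι κ R} {a : κ → R} {b : ι → R} (hW : W * diagonal a * Wᵀ = diagonal b) :
    (weightedSumSquares R a).comp W.vecMulLinear = weightedSumSquares R b := by
  ext x
  rw [QuadraticMap.comp_apply, Matrix.vecMulLinear_apply,
    weightedSumSquares_eq_dotProduct_diagonal_mulVec,
    weightedSumSquares_eq_dotProduct_diagonal_mulVec, ← hW, ← dotProduct_mulVec,
    ← mulVec_transpose W x, mulVec_mulVec, mulVec_mulVec, Matrix.mul_assoc]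

variable {K : Type*} [Field K] [LinearOrder K] [IsStrictOrderedRing K] {W : Matrix ι κ K}

theorem card_pos_le_of_mul_diagonal_mul_transpose [DecidableEq κ] {a : κ → K} {b : ι → K}
    (hW : W * diagonal a * Wᵀ = diagonal b) : #{i | 0 < b i} ≤ #{k | 0 < a k} := by
  have h := sigPos_comp_le (weightedSumSquares K a) W.vecMulLinear
  rw [weightedSumSquares_comp_vecMulLinear hW, QuadraticForm.sigPos_weightedSumSquares,
    QuadraticForm.sigPos_weightedSumSquares] at h
  simpa [Set.ncard_eq_toFinset_card'] using h

variable {d : κ → K} {μ : ι → K}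

theorem card_gt_le_of_mul_diagonal_mul_transpose [DecidableEq κ] (hW : W * Wᵀ = 1)
    (hd : W * diagonal d * Wᵀ = diagonal μ) (t : K) :
    #{i | t < μ i} ≤ #{k | t < d k} := by
  have hshift : W * diagonal (fun k ↦ d k - t) * Wᵀ = diagonal fun i ↦ μ i - t := by
    rw [← diagonal_sub, ← diagonal_sub, ← hd, ← smul_one_eq_diagonal, ← smul_one_eq_diagonal,
      Matrix.mul_sub, Matrix.sub_mul, Matrix.mul_smul, Matrix.mul_one, Matrix.smul_mul, hW]
  simpa only [sub_pos] using card_pos_le_of_mul_diagonal_mul_transpose hshift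

theorem card_ge_add_card_abs_lt_le_of_mul_diagonal_mul_transpose [DecidableEq κ] (hW : W * Wᵀ = 1)
    (hd : W * diagonal d * Wᵀ = diagonal μ) {r : K} (hr : 0 < r) :
    #{i | r ≤ μ i} + #{i | |μ i| < r} ≤ #{k | -r < d k} := by
  have hdisj : Disjoint (univ.filter fun i ↦ r ≤ μ i) (univ.filter fun i ↦ |μ i| < r) :=
    disjoint_filter.2 fun i _ hge habs ↦ (abs_lt.1 habs).2.not_ge hge
  calc #{i | r ≤ μ i} + #{i | |μ i| < r} = #{i | r ≤ μ i ∨ |μ i| < r} := by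
        rw [filter_or, card_union_of_disjoint hdisj]
    _ ≤ #{i | -r < μ i} := by
        refine card_le_card (monotone_filter_right _ fun i _ hi ↦ ?_)
        rcases hi with hge | habs
        · linarith
        · exact (abs_lt.1 habs).1
    _ ≤ #{k | -r < d k} := card_gt_le_of_mul_diagonal_mul_transpose hW hd (-r)

theorem statement10_general {w : ι → κ → K}
    (horth : ∀ i j, ∑ k, w i k * w j k = if i = j then 1 else 0)
    (hM : ∀ i j, ∑ k, d k * w i k * w j k = if i = j then μ i else 0) {r : K} (hr : 0 < r) :
    min #{i | r ≤ μ i} #{i | μ i ≤ -r} + #{i | |μ i| < r} ≤ min #{k | -r < d k} #{k | d k < r} := by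
  classical
  have hW : of w * (of w)ᵀ = 1 := by
    ext i j
    simp only [mul_apply, transpose_apply, of_apply, one_apply, horth]
  have hd : of w * diagonal d * (of w)ᵀ = diagonal μ := by
    ext i j
    rw [mul_apply, diagonal_apply, ← hM]
    simp only [mul_diagonal, transpose_apply, of_apply, mul_comm (w i _)]
  have hd_neg : of w * diagonal (fun k ↦ -d k) * (of w)ᵀ = diagonal fun i ↦ -μ i := by
    rw [← diagonal_neg, Matrix.mul_neg, Matrix.neg_mul, hd, diagonal_neg]
  have hpos := card_ge_add_card_abs_lt_le_of_mul_diagonal_mul_transpose hW hd hr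
  have hneg := card_ge_add_card_abs_lt_le_of_mul_diagonal_mul_transpose hW hd_neg hr
  simp only [abs_neg, neg_lt_neg_iff, le_neg (a := r)] at hneg
  omega

end Congruence

/-- the eigenvalue-counting lemma. If `M` is a diagonal `±1` matrix on `ℝ^n`
(given by its diagonal `ε`), `w₁, …, w_l` is an orthonormal family and
`⟨M wᵢ, w_j⟩ = λᵢ δᵢⱼ`, then with `m = min(p_M, n_M)`,
`min(#{i : λᵢ ≥ 1-ε}, #{i : λᵢ ≤ -(1-ε)}) + #{i : |λᵢ| < 1-ε} ≤ m`. -/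
theorem statement10 (n : ℕ) (hn : 2 ≤ n) (ε : Fin n → ℝ) (hε : ∀ k, ε k = 1 ∨ ε k = -1)
    (e : ℝ) (he0 : 0 < e) (he1 : e < 1)
    (l : ℕ) (w : Fin l → Fin n → ℝ) (lam : Fin l → ℝ)
    (horth : ∀ i j, (∑ k, w i k * w j k) = if i = j then (1 : ℝ) else 0)
    (hM : ∀ i j, (∑ k, ε k * w i k * w j k) = if i = j then lam i else 0) :
    min ((univ.filter fun i => 1 - e ≤ lam i).card)
        ((univ.filter fun i => lam i ≤ -(1 - e)).card)
      + (univ.filter fun i => |lam i| < 1 - e).card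
      ≤ min ((univ.filter fun k => ε k = 1).card)
            ((univ.filter fun k => ε k = -1).card) := by
  have eq_one_iff k : ε k = 1 ↔ -(1 - e) < ε k := by rcases hε k with h | h <;> rw [h] <;> grind
  have eq_neg_one_iff k : ε k = -1 ↔ ε k < 1 - e := by rcases hε k with h | h <;> rw [h] <;> grind
  simpa only [eq_one_iff, eq_neg_one_iff] using statement10_general horth hM (sub_pos.2 he1)
end
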